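/- (Theorem 2.5: dependent tensorization of T_p.) Let (E,d) be a Polish metric space, 1 ≤ p ≤ 2, and ℙ a probability measure on E^n. Assume that P_i(·|x^{i-1}) satisfies T_p(C) on (E,d) for all i ≥ 1 and all x^{i-1} ∈ E^{i-1}, and assume condition (C1): there exist a_j ≥ 0 with r^p := Σ_{j=1}^∞ a_j^p < 1 such that [W_p^d(P_i(·|x^{i-1}), P_i(·|x̃^{i-1}))]^p ≤ Σ_{j=1}^{i-1} a_j^p · d(x_{i-j}, x̃_{i-j})^p for all i and all x^{i-1}, x̃^{i-1} ∈ E^{i-1}. Then for every probability measure ℚ on E^n, W_p^{d_{l_p}}(ℚ,ℙ) ≤ (1/(1−r))·√(2C·n^{2/p−1}·H(ℚ|ℙ)). -/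

import Mathlib

open MeasureTheory ProbabilityTheory ENNReal

noncomputable section

/-- `π` is a coupling of `μ` and `ν`. -/
def IsCoupling {E F : Type*} [MeasurableSpace E] [MeasurableSpace F]
    (π : Measure (E × F)) (μ : Measure E) (ν : Measure F) : Prop :=
  π.map Prod.fst = μ ∧ π.map Prod.snd = ν

/-- The `L^p`-Wasserstein distance associated to the cost function `d`, valued in `ℝ≥0∞`. -/
def wassersteinDist {E : Type*} [MeasurableSpace E] (p : ℝ) (d : E → E → ℝ)
    (μ ν : Measure E) : ℝ≥0∞ :=
  ⨅ (π : Measure (E × E)) (_ : IsCoupling π μ ν),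
    (∫⁻ z, ENNReal.ofReal (d z.1 z.2) ^ p ∂π) ^ (1 / p)

/-- The `L^p`-Wasserstein distance for an extended (`ℝ≥0∞`-valued) pseudo-metric `d`. -/
def wassersteinDistE {E : Type*} [MeasurableSpace E] (p : ℝ) (d : E → E → ℝ≥0∞)
    (μ ν : Measure E) : ℝ≥0∞ :=
  ⨅ (π : Measure (E × E)) (_ : IsCoupling π μ ν),
    (∫⁻ z, d z.1 z.2 ^ p ∂π) ^ (1 / p)

open Classical in
/-- Relative entropy (Kullback information) `H(ν | μ)`, valued in `ℝ≥0∞`. -/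
def relEntropy {E : Type*} [MeasurableSpace E] (ν μ : Measure E) : ℝ≥0∞ :=
  if ν ≪ μ ∧ Integrable (fun x => Real.log ((ν.rnDeriv μ x).toReal)) ν then
    ENNReal.ofReal (∫ x, Real.log ((ν.rnDeriv μ x).toReal) ∂ν)
  else ∞

/-- The transportation cost-information inequality `T_p(C)` for `μ` on `(E, d)`:
`W_p(μ, ν) ≤ √(2 C H(ν|μ))` for every probability measure `ν`, written in the equivalent
squared form `W_p(μ,ν)² ≤ 2C·H(ν|μ)` in `ℝ≥0∞`. -/
def TpIneq {E : Type*} [MeasurableSpace E] (p : ℝ) (d : E → E → ℝ) (C : ℝ)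
    (μ : Measure E) : Prop :=
  ∀ ν : Measure E, IsProbabilityMeasure ν →
    wassersteinDist p d μ ν ^ 2 ≤ ENNReal.ofReal (2 * C) * relEntropy ν μ

/-- The transportation cost-information inequality `T_p(C)` for an extended pseudo-metric. -/
def TpIneqE {E : Type*} [MeasurableSpace E] (p : ℝ) (d : E → E → ℝ≥0∞) (C : ℝ)
    (μ : Measure E) : Prop :=
  ∀ ν : Measure E, IsProbabilityMeasure ν →
    wassersteinDistE p d μ ν ^ 2 ≤ ENNReal.ofReal (2 * C) * relEntropy ν μ

/-- The law on `E^n` of the (in general non-homogeneous, non-Markovian) random sequence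
determined by the successive regular conditional laws `K i : (Fin i → E) → Measure E`
of the `(i+1)`-th coordinate given the first `i` coordinates. -/
def chainMeasure {E : Type*} [MeasurableSpace E]
    (K : (i : ℕ) → (Fin i → E) → Measure E) : (n : ℕ) → Measure (Fin n → E)
  | 0 => Measure.dirac (fun i => i.elim0)
  | n + 1 => (chainMeasure K n).bind fun x => (K n x).map (Fin.snoc x)

/-! ### Couplings of discrete measures -/

lemma exists_finsupp_approx {ι : Type*} (w γ : ι → ℝ≥0∞) (hγ : ∀ i, γ i ≠ ∞)
    (hw : ∀ i, w i ≠ ∞) (h : ∑' i, w i * γ i ≠ ∞) {ε : ℝ≥0∞} (hε : ε ≠ 0) :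
    ∃ (c : ι →₀ ℕ) (N : ℕ), (∀ i, (c i : ℝ≥0∞) / (N + 1) ≤ γ i) ∧
      ∑' i, w i * (γ i - c i / (N + 1)) ≤ ε := by
  classical
  have hε2 : 0 < ε / 2 := ENNReal.half_pos hε
  obtain ⟨S, hS⟩ := ((ENNReal.tendsto_tsum_compl_atTop_zero h).eventually
    (gt_mem_nhds hε2)).exists
  have hSw : ∑ i ∈ S, w i ≠ ∞ := ENNReal.sum_ne_top.2 fun i _ => hw i
  obtain ⟨N, hN⟩ := ENNReal.exists_nat_gt (ENNReal.div_ne_top hSw hε2.ne')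
  have hN0 : ((N : ℝ≥0∞) + 1) ≠ 0 := by simp
  have hNt : ((N : ℝ≥0∞) + 1) ≠ ∞ := by finiteness
  have hfl (i : ι) : (⌊((N : ℝ) + 1) * (γ i).toReal⌋₊ : ℝ≥0∞) ≤ (N + 1) * γ i := by
    have h1 := Nat.floor_le (a := ((N : ℝ) + 1) * (γ i).toReal) (by positivity)
    have h2 := ENNReal.ofReal_le_ofReal h1
    rwa [ENNReal.ofReal_natCast, ENNReal.ofReal_mul (by positivity),
      ENNReal.ofReal_toReal (hγ i), ENNReal.ofReal_add (by positivity) zero_le_one,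
      ENNReal.ofReal_natCast, ENNReal.ofReal_one] at h2
  have hfl' (i : ι) : (N + 1) * γ i ≤ (⌊((N : ℝ) + 1) * (γ i).toReal⌋₊ : ℝ≥0∞) + 1 := by
    have h1 := (Nat.lt_floor_add_one (((N : ℝ) + 1) * (γ i).toReal)).le
    have h2 := ENNReal.ofReal_le_ofReal h1
    rwa [ENNReal.ofReal_mul (by positivity),
      ENNReal.ofReal_toReal (hγ i), ENNReal.ofReal_add (by positivity) zero_le_one,
      ENNReal.ofReal_add (by positivity) zero_le_one,
      ENNReal.ofReal_natCast, ENNReal.ofReal_natCast, ENNReal.ofReal_one] at h2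
  obtain ⟨c, hc⟩ : ∃ c : ι →₀ ℕ,
      ∀ i, c i = if i ∈ S then ⌊((N : ℝ) + 1) * (γ i).toReal⌋₊ else 0 :=
    ⟨Finsupp.onFinset S _ (fun i hi => by by_contra hc; exact hi (if_neg hc)), fun i => rfl⟩
  refine ⟨c, N, fun i => ?_, ?_⟩
  · by_cases hi : i ∈ S
    · rw [hc, if_pos hi]
      exact ENNReal.div_le_of_le_mul' (hfl i)
    · simp [hc, hi]
  · have hsplit (f : ι → ℝ≥0∞) : ∑' i, f i = ∑ i ∈ S, f i + ∑' i : {x // x ∉ S}, f i := by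
      rw [← Finset.tsum_subtype' S f]
      exact (ENNReal.summable.tsum_add_tsum_compl (s := (S : Set ι)) ENNReal.summable).symm
    rw [hsplit, ← ENNReal.add_halves ε]
    refine add_le_add ?_ ?_
    · calc ∑ i ∈ S, w i * (γ i - c i / (N + 1))
          ≤ ∑ i ∈ S, w i * (N + 1 : ℝ≥0∞)⁻¹ := by
            refine Finset.sum_le_sum fun i hi => ?_
            gcongr
            rw [hc, if_pos hi, tsub_le_iff_right, ← one_div, ← ENNReal.add_div, add_comm,
              ENNReal.le_div_iff_mul_le (Or.inl hN0) (Or.inl hNt), mul_comm]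
            exact hfl' i
        _ = (∑ i ∈ S, w i) / (N + 1) := by rw [← Finset.sum_mul, div_eq_mul_inv]
        _ ≤ ε / 2 := by
            refine ENNReal.div_le_of_le_mul' ?_
            rw [← ENNReal.div_le_iff_le_mul (Or.inl hε2.ne') (Or.inr hN0)]
            exact hN.le.trans le_self_add
    · refine le_trans (ENNReal.tsum_le_tsum fun i => ?_) hS.le
      have hi : (i : ι) ∉ S := i.2
      simp [hc, hi]

/-- Completion of a sub-coupling `m` of the weights `u` and `v` to a coupling, by an independent
coupling of the missing masses. -/
def fillCoupling (u v : ℕ → ℝ≥0∞) (m : ℕ → ℕ → ℝ≥0∞) (s t : ℕ) : ℝ≥0∞ :=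
  m s t + (u s - ∑' t, m s t) * (v t - ∑' s, m s t) / (1 - ∑' s, ∑' t, m s t)

lemma fillCoupling_swap (u v : ℕ → ℝ≥0∞) (m : ℕ → ℕ → ℝ≥0∞) (s t : ℕ) :
    fillCoupling u v m s t = fillCoupling v u (fun t s => m s t) t s := by
  simp only [fillCoupling]
  rw [mul_comm (u s - _), ENNReal.tsum_comm (f := m)]

section Discrete

variable {u v : ℕ → ℝ≥0∞} {m : ℕ → ℕ → ℝ≥0∞}

lemma tsum_sub_colSum (hv : ∑' t, v t = 1) (hc : ∀ t, ∑' s, m s t ≤ v t) :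
    ∑' t, (v t - ∑' s, m s t) = 1 - ∑' s, ∑' t, m s t := by
  rw [ENNReal.tsum_sub _ hc, hv, ENNReal.tsum_comm]
  exact ne_top_of_le_ne_top ENNReal.one_ne_top (hv ▸ ENNReal.tsum_le_tsum hc)

lemma tsum_fillCoupling_right (hu : ∑' s, u s = 1) (hv : ∑' t, v t = 1)
    (hr : ∀ s, ∑' t, m s t ≤ u s) (hc : ∀ t, ∑' s, m s t ≤ v t) (s : ℕ) :
    ∑' t, fillCoupling u v m s t = u s := by
  simp only [fillCoupling, div_eq_mul_inv]
  rw [ENNReal.tsum_add, ENNReal.tsum_mul_right, ENNReal.tsum_mul_left, tsum_sub_colSum hv hc]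
  have hrow := tsum_sub_colSum (m := fun t s => m s t) hu hr
  rw [ENNReal.tsum_comm] at hrow
  set ρ := 1 - ∑' s, ∑' t, m s t with hρ
  by_cases h0 : ρ = 0
  · rw [h0, ENNReal.tsum_eq_zero] at hrow
    rw [hrow s, zero_mul, zero_mul, add_zero]
    exact le_antisymm (hr s) (tsub_eq_zero_iff_le.1 (hrow s))
  · have ht : ρ ≠ ∞ := by finiteness
    rw [mul_assoc, ENNReal.mul_inv_cancel h0 ht, mul_one, add_tsub_cancel_of_le (hr s)]

lemma tsum_fillCoupling_left (hu : ∑' s, u s = 1) (hv : ∑' t, v t = 1)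
    (hr : ∀ s, ∑' t, m s t ≤ u s) (hc : ∀ t, ∑' s, m s t ≤ v t) (t : ℕ) :
    ∑' s, fillCoupling u v m s t = v t := by
  simp_rw [fillCoupling_swap u v m]
  exact tsum_fillCoupling_right hv hu hc hr t

lemma tsum_mul_fillCoupling_le (hu : ∑' s, u s = 1) (hv : ∑' t, v t = 1)
    (hr : ∀ s, ∑' t, m s t ≤ u s) (hc : ∀ t, ∑' s, m s t ≤ v t)
    {D : ℕ → ℕ → ℝ≥0∞} {φ : ℕ → ℝ≥0∞} (hD : ∀ s t, D s t ≤ φ s + φ t) :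
    ∑' s, ∑' t, D s t * fillCoupling u v m s t ≤ ∑' s, ∑' t, D s t * m s t +
      (∑' s, φ s * (u s - ∑' t, m s t) + ∑' t, φ t * (v t - ∑' s, m s t)) := by
  have hcol := tsum_sub_colSum hv hc
  have hrow := tsum_sub_colSum (m := fun t s => m s t) hu hr
  rw [ENNReal.tsum_comm] at hrow
  simp only [fillCoupling]
  set ρ := 1 - ∑' s, ∑' t, m s t with hρ
  set A : ℕ → ℝ≥0∞ := fun s => u s - ∑' t, m s t with hA
  set B : ℕ → ℝ≥0∞ := fun t => v t - ∑' s, m s t with hB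
  have hρ1 : ρ * ρ⁻¹ ≤ 1 := by
    rw [← div_eq_mul_inv]; exact ENNReal.div_self_le_one
  calc ∑' s, ∑' t, D s t * (m s t + A s * B t / ρ)
      ≤ ∑' s, ∑' t, (D s t * m s t + (φ s * A s * B t * ρ⁻¹ + A s * (φ t * B t) * ρ⁻¹)) := by
        refine ENNReal.tsum_le_tsum fun s => ENNReal.tsum_le_tsum fun t => ?_
        rw [mul_add, div_eq_mul_inv]
        gcongr
        calc D s t * (A s * B t * ρ⁻¹) ≤ (φ s + φ t) * (A s * B t * ρ⁻¹) := by
              gcongr; exact hD s t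
          _ = _ := by ring
    _ = ∑' s, ∑' t, D s t * m s t +
        ((∑' s, φ s * A s) * (ρ * ρ⁻¹) + (∑' t, φ t * B t) * (ρ * ρ⁻¹)) := by
        simp only [ENNReal.tsum_add, ENNReal.tsum_mul_right, ENNReal.tsum_mul_left, hcol, hrow]
        ring
    _ ≤ _ := by
        gcongr
        · exact mul_le_of_le_one_right' hρ1
        · exact mul_le_of_le_one_right' hρ1

lemma exists_subcoupling_approx {γ : ℕ → ℕ → ℝ≥0∞} (hu : ∑' s, u s = 1) (hv : ∑' t, v t = 1)
    (hγr : ∀ s, ∑' t, γ s t = u s) (hγc : ∀ t, ∑' s, γ s t = v t)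
    {D : ℕ → ℕ → ℝ≥0∞} {φ : ℕ → ℝ≥0∞} (hφ : ∀ s, φ s ≠ ∞) (hD : ∀ s t, D s t ≤ φ s + φ t)
    (hφu : ∑' s, φ s * u s ≠ ∞) (hφv : ∑' t, φ t * v t ≠ ∞) {ε : ℝ≥0∞} (hε : ε ≠ 0) :
    ∃ (c : ℕ × ℕ →₀ ℕ) (N : ℕ),
      (∀ s, ∑' t, (c (s, t) : ℝ≥0∞) / (N + 1) ≤ u s) ∧
      (∀ t, ∑' s, (c (s, t) : ℝ≥0∞) / (N + 1) ≤ v t) ∧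
      ∑' s, ∑' t, D s t * fillCoupling u v (fun s t => (c (s, t) : ℝ≥0∞) / (N + 1)) s t ≤
        ∑' s, ∑' t, D s t * γ s t + ε := by
  have huγ (s t : ℕ) : γ s t ≠ ∞ := by
    refine ne_top_of_le_ne_top ENNReal.one_ne_top ?_
    calc γ s t ≤ ∑' t, γ s t := ENNReal.le_tsum t
      _ = u s := hγr s
      _ ≤ ∑' s, u s := ENNReal.le_tsum s
      _ = 1 := hu
  have hsplit (g : ℕ → ℕ → ℝ≥0∞) : ∑' i : ℕ × ℕ, (φ i.1 + φ i.2) * g i.1 i.2 =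
      ∑' s, φ s * ∑' t, g s t + ∑' t, φ t * ∑' s, g s t := by
    simp_rw [ENNReal.tsum_prod', add_mul, ENNReal.tsum_add, ENNReal.tsum_mul_left]
    congr 1
    rw [ENNReal.tsum_comm]
    simp_rw [ENNReal.tsum_mul_left]
  obtain ⟨c, N, h1, h2⟩ := exists_finsupp_approx (fun i : ℕ × ℕ => φ i.1 + φ i.2)
    (fun i => γ i.1 i.2) (fun i => huγ _ _) (fun i => ENNReal.add_ne_top.2 ⟨hφ _, hφ _⟩)
    (by rw [hsplit γ]; simp_rw [hγr, hγc]; exact ENNReal.add_ne_top.2 ⟨hφu, hφv⟩) hε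
  set m : ℕ → ℕ → ℝ≥0∞ := fun s t => (c (s, t) : ℝ≥0∞) / (N + 1) with hm
  have hmγ (s t) : m s t ≤ γ s t := h1 (s, t)
  have hr (s) : ∑' t, m s t ≤ u s := hγr s ▸ ENNReal.tsum_le_tsum fun t => hmγ s t
  have hc (t) : ∑' s, m s t ≤ v t := hγc t ▸ ENNReal.tsum_le_tsum fun s => hmγ s t
  have hut (s) : u s ≠ ∞ := ne_top_of_le_ne_top ENNReal.one_ne_top (hu ▸ ENNReal.le_tsum s)
  have hvt (s) : v s ≠ ∞ := ne_top_of_le_ne_top ENNReal.one_ne_top (hv ▸ ENNReal.le_tsum s)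
  refine ⟨c, N, hr, hc, (tsum_mul_fillCoupling_le hu hv hr hc hD).trans ?_⟩
  gcongr ?_ + ?_
  · exact ENNReal.tsum_le_tsum fun s => ENNReal.tsum_le_tsum fun t => by gcongr; exact hmγ s t
  · refine le_trans (le_of_eq ?_) h2
    have := hsplit (fun s t => γ s t - m s t)
    simp only [hm] at this
    rw [this]
    congr 1
    · refine tsum_congr fun s => ?_
      rw [ENNReal.tsum_sub (ne_top_of_le_ne_top (hut s) (hr s)) (fun t => hmγ s t), hγr]
    · refine tsum_congr fun t => ?_
      rw [ENNReal.tsum_sub (ne_top_of_le_ne_top (hvt t) (hc t)) (fun s => hmγ s t), hγc]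

end Discrete

/-! ### Couplings with a density constant on the cells of a partition -/

section Density

variable {E : Type*} [MeasurableSpace E] {μ ν : Measure E} {σ : E → ℕ}

lemma ae_measure_fiber_ne_zero (μ : Measure E) (σ : E → ℕ) : ∀ᵐ y ∂μ, μ (σ ⁻¹' {σ y}) ≠ 0 := by
  rw [ae_iff]
  refine measure_mono_null (t := ⋃ s ∈ {s | μ (σ ⁻¹' {s}) = 0}, σ ⁻¹' {s}) (fun y hy => ?_) ?_
  · simpa using hy
  · exact (measure_biUnion_null_iff (Set.to_countable _)).2 fun s hs => hs

lemma lintegral_comp_eq_tsum (μ : Measure E) (hσ : Measurable σ) (f : ℕ → ℝ≥0∞) :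
    ∫⁻ y, f (σ y) ∂μ = ∑' s, f s * μ (σ ⁻¹' {s}) := by
  rw [← lintegral_map (f := f) measurable_from_top hσ, lintegral_countable']
  simp_rw [Measure.map_apply hσ (measurableSet_singleton _)]

lemma tsum_measure_fiber [IsProbabilityMeasure μ] (hσ : Measurable σ) :
    ∑' s, μ (σ ⁻¹' {s}) = 1 := by
  simpa using (lintegral_comp_eq_tsum μ hσ 1).symm

/-- The density with respect to `μ.prod ν` of the coupling that has masses `M s t` on the cells
`σ ⁻¹' {s} ×ˢ σ ⁻¹' {t}` and is conditionally independent given the cell. -/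
def cellDensity (μ ν : Measure E) (σ : E → ℕ) (M : ℕ → ℕ → ℝ≥0∞) (z : E × E) : ℝ≥0∞ :=
  M (σ z.1) (σ z.2) / (μ (σ ⁻¹' {σ z.1}) * ν (σ ⁻¹' {σ z.2}))

lemma measurable_cellDensity (μ ν : Measure E) (hσ : Measurable σ) (M : ℕ → ℕ → ℝ≥0∞) :
    Measurable (cellDensity μ ν σ M) := by
  have h : Measurable fun i : ℕ × ℕ => M i.1 i.2 / (μ (σ ⁻¹' {i.1}) * ν (σ ⁻¹' {i.2})) :=
    Measurable.of_discrete
  exact h.comp ((hσ.comp measurable_fst).prodMk (hσ.comp measurable_snd))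

variable {M : ℕ → ℕ → ℝ≥0∞}

lemma cellDensity_swap (z : E × E) :
    cellDensity μ ν σ M z.swap = cellDensity ν μ σ (fun s t => M t s) z := by
  simp [cellDensity, mul_comm]

lemma ae_lintegral_cellDensity [IsProbabilityMeasure μ] [IsProbabilityMeasure ν]
    (hσ : Measurable σ) (hr : ∀ s, ∑' t, M s t = μ (σ ⁻¹' {s}))
    (hc : ∀ t, ∑' s, M s t = ν (σ ⁻¹' {t})) :
    ∀ᵐ y ∂μ, ∫⁻ z, cellDensity μ ν σ M (y, z) ∂ν = 1 := by
  filter_upwards [ae_measure_fiber_ne_zero μ σ] with y hy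
  have h0 (t : ℕ) : M (σ y) t / (μ (σ ⁻¹' {σ y}) * ν (σ ⁻¹' {t})) * ν (σ ⁻¹' {t}) =
      M (σ y) t / μ (σ ⁻¹' {σ y}) := by
    by_cases ht : ν (σ ⁻¹' {t}) = 0
    · have : M (σ y) t = 0 := by
        have h := hc t
        rw [ht, ENNReal.tsum_eq_zero] at h
        exact h _
      simp [this]
    · rw [div_eq_mul_inv, ENNReal.mul_inv (Or.inl hy) (Or.inl (measure_ne_top _ _)), mul_assoc,
        mul_assoc, ENNReal.inv_mul_cancel ht (measure_ne_top _ _), mul_one, div_eq_mul_inv]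
  have h := lintegral_comp_eq_tsum ν hσ
    fun t => M (σ y) t / (μ (σ ⁻¹' {σ y}) * ν (σ ⁻¹' {t}))
  simp only [cellDensity]
  rw [h]
  simp_rw [h0, div_eq_mul_inv, ENNReal.tsum_mul_right, hr]
  exact ENNReal.mul_inv_cancel hy (measure_ne_top _ _)

lemma isCoupling_cellDensity [IsProbabilityMeasure μ] [IsProbabilityMeasure ν]
    (hσ : Measurable σ) (hr : ∀ s, ∑' t, M s t = μ (σ ⁻¹' {s}))
    (hc : ∀ t, ∑' s, M s t = ν (σ ⁻¹' {t})) :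
    IsCoupling ((μ.prod ν).withDensity (cellDensity μ ν σ M)) μ ν := by
  have hm := measurable_cellDensity μ ν hσ M
  constructor
  · ext B hB
    have hB' : MeasurableSet (Prod.fst ⁻¹' B : Set (E × E)) := measurable_fst hB
    rw [Measure.map_apply measurable_fst hB, withDensity_apply _ hB', ← lintegral_indicator hB',
      lintegral_prod _ (hm.indicator hB').aemeasurable, ← lintegral_indicator_one hB]
    refine lintegral_congr_ae ?_
    filter_upwards [ae_lintegral_cellDensity hσ hr hc] with y hy
    by_cases hyB : y ∈ B
    · simpa [Set.indicator, hyB] using hy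
    · simp [Set.indicator, hyB]
  · ext B hB
    have hB' : MeasurableSet (Prod.snd ⁻¹' B : Set (E × E)) := measurable_snd hB
    rw [Measure.map_apply measurable_snd hB, withDensity_apply _ hB', ← lintegral_indicator hB',
      lintegral_prod_symm' _ (hm.indicator hB'), ← lintegral_indicator_one hB]
    refine lintegral_congr_ae ?_
    filter_upwards [ae_lintegral_cellDensity (μ := ν) (ν := μ) (M := fun s t => M t s) hσ hc hr]
      with z hz
    have hz' : ∫⁻ y, cellDensity μ ν σ M (y, z) ∂μ = 1 := by
      rw [← hz]
      exact lintegral_congr fun y => cellDensity_swap (z, y)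
    by_cases hzB : z ∈ B
    · simpa [Set.indicator, hzB] using hz'
    · simp [Set.indicator, hzB]

lemma lintegral_cellDensity_le [IsProbabilityMeasure μ] [IsProbabilityMeasure ν]
    (hσ : Measurable σ) (D : ℕ → ℕ → ℝ≥0∞) :
    ∫⁻ z, D (σ z.1) (σ z.2) ∂((μ.prod ν).withDensity (cellDensity μ ν σ M)) ≤
      ∑' s, ∑' t, D s t * M s t := by
  have hm := measurable_cellDensity μ ν hσ M
  have hD : Measurable fun z : E × E => D (σ z.1) (σ z.2) :=
    (Measurable.of_discrete (f := fun i : ℕ × ℕ => D i.1 i.2)).comp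
      ((hσ.comp measurable_fst).prodMk (hσ.comp measurable_snd))
  rw [lintegral_withDensity_eq_lintegral_mul _ hm hD, lintegral_prod _ (hm.mul hD).aemeasurable]
  have h1 (y : E) : ∫⁻ z, (cellDensity μ ν σ M * fun z : E × E => D (σ z.1) (σ z.2)) (y, z) ∂ν =
      ∑' t, M (σ y) t / (μ (σ ⁻¹' {σ y}) * ν (σ ⁻¹' {t})) * D (σ y) t * ν (σ ⁻¹' {t}) :=
    lintegral_comp_eq_tsum ν hσ
      fun t => M (σ y) t / (μ (σ ⁻¹' {σ y}) * ν (σ ⁻¹' {t})) * D (σ y) t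
  simp_rw [h1]
  rw [lintegral_comp_eq_tsum μ hσ fun s => ∑' t, M s t / (μ (σ ⁻¹' {s}) * ν (σ ⁻¹' {t})) *
    D s t * ν (σ ⁻¹' {t})]
  simp_rw [← ENNReal.tsum_mul_right]
  refine ENNReal.tsum_le_tsum fun s => ENNReal.tsum_le_tsum fun t => ?_
  calc M s t / (μ (σ ⁻¹' {s}) * ν (σ ⁻¹' {t})) * D s t * ν (σ ⁻¹' {t}) * μ (σ ⁻¹' {s})
      = D s t * ((μ (σ ⁻¹' {s}) * ν (σ ⁻¹' {t})) *
          (M s t / (μ (σ ⁻¹' {s}) * ν (σ ⁻¹' {t})))) := by ring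
    _ ≤ D s t * M s t := by gcongr; exact ENNReal.mul_div_le

end Density

/-! ### Measurable selection of nearly optimal couplings -/

lemma IsCoupling.isProbabilityMeasure {E F : Type*} [MeasurableSpace E] [MeasurableSpace F]
    {γ : Measure (E × F)} {μ : Measure E} {ν : Measure F} [IsProbabilityMeasure μ]
    (h : IsCoupling γ μ ν) : IsProbabilityMeasure γ := by
  constructor
  have := congrArg (fun m => m Set.univ) h.1
  simpa [Measure.map_apply measurable_fst MeasurableSet.univ] using this

section Cells

variable {E : Type*} [MetricSpace E]

/-- An upper bound for the cost of moving mass between two cells of mesh `(k + 1)⁻¹`. -/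
def cellCost (q : ℕ → E) (p : ℝ) (k s t : ℕ) : ℝ≥0∞ :=
  (edist (q s) (q t) + 2 * ((k : ℝ≥0∞) + 1)⁻¹) ^ p

variable {q : ℕ → E} {σ : ℕ → E → ℕ}

lemma edist_le_cell (hq : ∀ k y, edist (q (σ k y)) y ≤ ((k : ℝ≥0∞) + 1)⁻¹) (k : ℕ) (y z : E) :
    edist y z ≤ edist (q (σ k y)) (q (σ k z)) + 2 * ((k : ℝ≥0∞) + 1)⁻¹ := by
  calc edist y z ≤ edist y (q (σ k y)) + edist (q (σ k y)) (q (σ k z)) + edist (q (σ k z)) z :=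
        edist_triangle4 _ _ _ _
    _ ≤ ((k : ℝ≥0∞) + 1)⁻¹ + edist (q (σ k y)) (q (σ k z)) + ((k : ℝ≥0∞) + 1)⁻¹ := by
        gcongr
        · rw [edist_comm]; exact hq k y
        · exact hq k z
    _ = _ := by ring

lemma edist_cell_le (hq : ∀ k y, edist (q (σ k y)) y ≤ ((k : ℝ≥0∞) + 1)⁻¹) (k : ℕ) (y z : E) :
    edist (q (σ k y)) (q (σ k z)) ≤ edist y z + 2 * ((k : ℝ≥0∞) + 1)⁻¹ := by
  calc edist (q (σ k y)) (q (σ k z))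
      ≤ edist (q (σ k y)) y + edist y z + edist z (q (σ k z)) := edist_triangle4 _ _ _ _
    _ ≤ ((k : ℝ≥0∞) + 1)⁻¹ + edist y z + ((k : ℝ≥0∞) + 1)⁻¹ := by
        gcongr
        · exact hq k y
        · rw [edist_comm]; exact hq k z
    _ = _ := by ring

end Cells

section Selection

variable {E : Type*} [MeasurableSpace E] [MetricSpace E] [SecondCountableTopology E] [BorelSpace E]

lemma exists_quantization [Nonempty E] : ∃ (q : ℕ → E) (σ : ℕ → E → ℕ),
    (∀ k, Measurable (σ k)) ∧ ∀ k y, edist (q (σ k y)) y ≤ ((k : ℝ≥0∞) + 1)⁻¹ := by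
  classical
  have hex (k : ℕ) (y : E) :
      ∃ n, edist (TopologicalSpace.denseSeq E n) y ≤ ((k : ℝ≥0∞) + 1)⁻¹ := by
    have hpos : 0 < ((k : ℝ≥0∞) + 1)⁻¹ := ENNReal.inv_pos.2 (by finiteness)
    obtain ⟨_, ⟨n, rfl⟩, hn⟩ :=
      EMetric.mem_closure_iff.1 (TopologicalSpace.denseRange_denseSeq E y) _ hpos
    exact ⟨n, by rw [edist_comm]; exact hn.le⟩
  refine ⟨TopologicalSpace.denseSeq E, fun k y => Nat.find (hex k y), fun k => ?_,
    fun k y => Nat.find_spec (hex k y)⟩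
  exact measurable_find (hex k) fun n =>
    measurableSet_le (measurable_const.edist measurable_id) measurable_const

lemma lintegral_add_const_rpow_le {α : Type*} [MeasurableSpace α] {μ : Measure α}
    [IsProbabilityMeasure μ] {f : α → ℝ≥0∞} (hf : AEMeasurable f μ) {p : ℝ} (hp : 1 ≤ p)
    (c : ℝ≥0∞) : ∫⁻ x, (f x + c) ^ p ∂μ ≤ ((∫⁻ x, f x ^ p ∂μ) ^ (1 / p) + c) ^ p := by
  have hp0 : 0 < p := by linarith
  have h := ENNReal.lintegral_Lp_add_le hf (aemeasurable_const (b := c)) hp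
  simp only [Pi.add_apply, lintegral_const, measure_univ, mul_one] at h
  rw [← ENNReal.rpow_mul, mul_one_div_cancel hp0.ne', ENNReal.rpow_one] at h
  rwa [← ENNReal.rpow_le_rpow_iff (z := 1 / p) (by positivity), ← ENNReal.rpow_mul,
    mul_one_div_cancel hp0.ne', ENNReal.rpow_one]

lemma exists_inv_nat_rpow_lt {p : ℝ} (hp : 1 ≤ p) {I c : ℝ≥0∞} (h : I < c) :
    ∃ k : ℕ, (I ^ (1 / p) + 4 * ((k : ℝ≥0∞) + 1)⁻¹) ^ p < c := by
  have hp0 : 0 < p := by linarith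
  have h1 : Filter.Tendsto (fun k : ℕ => ((k : ℝ≥0∞) + 1)⁻¹) Filter.atTop (nhds 0) := by
    have := ENNReal.tendsto_inv_nat_nhds_zero.comp (Filter.tendsto_add_atTop_nat 1)
    simpa [Function.comp_def] using this
  have h2 : Filter.Tendsto (fun k : ℕ => (I ^ (1 / p) + 4 * ((k : ℝ≥0∞) + 1)⁻¹) ^ p)
      Filter.atTop (nhds ((I ^ (1 / p) + 4 * 0) ^ p)) :=
    ((ENNReal.continuous_rpow_const.tendsto _).comp
      (tendsto_const_nhds.add (ENNReal.Tendsto.const_mul h1 (Or.inr (by finiteness)))))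
  rw [mul_zero, add_zero, ← ENNReal.rpow_mul, one_div_mul_cancel hp0.ne', ENNReal.rpow_one] at h2
  exact (h2.eventually (gt_mem_nhds h)).exists

variable {q : ℕ → E} {σ : ℕ → E → ℕ}

lemma lintegral_fiber_rpow_ne_top {μ : Measure E} [IsProbabilityMeasure μ]
    (hq : ∀ k y, edist (q (σ k y)) y ≤ ((k : ℝ≥0∞) + 1)⁻¹) {p : ℝ} (hp : 1 ≤ p) {o : E}
    (hμ : ∫⁻ y, edist y o ^ p ∂μ ≠ ∞) (k : ℕ) :
    ∫⁻ y, 2 ^ (p - 1) * (edist (q (σ k y)) o + 2 * ((k : ℝ≥0∞) + 1)⁻¹) ^ p ∂μ ≠ ∞ := by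
  have hp0 : 0 < p := by linarith
  have h2 : (2 : ℝ≥0∞) ^ (p - 1) ≠ ∞ := ENNReal.rpow_ne_top_of_nonneg (by linarith) (by simp)
  have hk : ((k : ℝ≥0∞) + 1)⁻¹ ≠ ∞ := ENNReal.inv_ne_top.2 (by simp)
  rw [lintegral_const_mul' _ _ h2]
  refine ENNReal.mul_ne_top h2 (ne_top_of_le_ne_top ?_ ((lintegral_mono fun y => ?_).trans
    (lintegral_add_const_rpow_le (μ := μ) (f := fun y => edist y o) (by fun_prop) hp
      (3 * ((k : ℝ≥0∞) + 1)⁻¹))))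
  · exact ENNReal.rpow_ne_top_of_nonneg hp0.le (ENNReal.add_ne_top.2
      ⟨ENNReal.rpow_ne_top_of_nonneg (by positivity) hμ, ENNReal.mul_ne_top (by simp) hk⟩)
  · refine ENNReal.rpow_le_rpow ?_ hp0.le
    calc edist (q (σ k y)) o + 2 * ((k : ℝ≥0∞) + 1)⁻¹
        ≤ (((k : ℝ≥0∞) + 1)⁻¹ + edist y o) + 2 * ((k : ℝ≥0∞) + 1)⁻¹ := by
          gcongr
          exact (edist_triangle _ y _).trans (by gcongr; exact hq k y)
      _ = _ := by ring

lemma exists_cell_coupling {μ ν : Measure E} [IsProbabilityMeasure μ] [IsProbabilityMeasure ν]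
    (hσ : ∀ k, Measurable (σ k)) (hq : ∀ k y, edist (q (σ k y)) y ≤ ((k : ℝ≥0∞) + 1)⁻¹)
    {p : ℝ} (hp : 1 ≤ p) {o : E} (hμ : ∫⁻ y, edist y o ^ p ∂μ ≠ ∞)
    (hν : ∫⁻ y, edist y o ^ p ∂ν ≠ ∞) {γ : Measure (E × E)} (hγ : IsCoupling γ μ ν) {c : ℝ≥0∞}
    (hc : ∫⁻ z, edist z.1 z.2 ^ p ∂γ < c) :
    ∃ (k N : ℕ) (a : ℕ × ℕ →₀ ℕ),
      (∀ s, ∑' t, (a (s, t) : ℝ≥0∞) / (N + 1) ≤ μ (σ k ⁻¹' {s})) ∧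
      (∀ t, ∑' s, (a (s, t) : ℝ≥0∞) / (N + 1) ≤ ν (σ k ⁻¹' {t})) ∧
      ∑' s, ∑' t, cellCost q p k s t * fillCoupling (fun s => μ (σ k ⁻¹' {s}))
        (fun t => ν (σ k ⁻¹' {t})) (fun s t => (a (s, t) : ℝ≥0∞) / (N + 1)) s t ≤ c := by
  have hp0 : 0 < p := by linarith
  have := hγ.isProbabilityMeasure
  obtain ⟨k, hk⟩ := exists_inv_nat_rpow_lt hp hc
  have hkt : ((k : ℝ≥0∞) + 1)⁻¹ ≠ ∞ := ENNReal.inv_ne_top.2 (by simp)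
  have h2 : (2 : ℝ≥0∞) ^ (p - 1) ≠ ∞ := ENNReal.rpow_ne_top_of_nonneg (by linarith) (by simp)
  set φ : ℕ → ℝ≥0∞ := fun s => 2 ^ (p - 1) * (edist (q s) o + 2 * ((k : ℝ≥0∞) + 1)⁻¹) ^ p with hφ
  have hD (s t : ℕ) : cellCost q p k s t ≤ φ s + φ t := by
    rw [hφ, cellCost, ← mul_add]
    refine le_trans (ENNReal.rpow_le_rpow ?_ hp0.le)
      (ENNReal.rpow_add_le_mul_rpow_add_rpow _ _ hp)
    calc edist (q s) (q t) + 2 * ((k : ℝ≥0∞) + 1)⁻¹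
        ≤ (edist (q s) o + edist (q t) o) + 2 * ((k : ℝ≥0∞) + 1)⁻¹ := by
          gcongr; exact edist_triangle_right _ _ _
      _ ≤ (edist (q s) o + edist (q t) o) +
          (2 * ((k : ℝ≥0∞) + 1)⁻¹ + 2 * ((k : ℝ≥0∞) + 1)⁻¹) := by
          gcongr; exact le_self_add
      _ = _ := by ring
  have hγD : ∑' s, ∑' t, cellCost q p k s t * γ ((σ k ⁻¹' {s}) ×ˢ (σ k ⁻¹' {t})) < c := by
    refine lt_of_le_of_lt ?_ hk
    have hσσ : Measurable fun z : E × E => (σ k z.1, σ k z.2) :=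
      ((hσ k).comp measurable_fst).prodMk ((hσ k).comp measurable_snd)
    have h1 : ∫⁻ z, cellCost q p k (σ k z.1) (σ k z.2) ∂γ =
        ∑' s, ∑' t, cellCost q p k s t * γ ((σ k ⁻¹' {s}) ×ˢ (σ k ⁻¹' {t})) := by
      rw [← lintegral_map (f := fun i : ℕ × ℕ => cellCost q p k i.1 i.2)
        Measurable.of_discrete hσσ, lintegral_countable', ENNReal.tsum_prod']
      refine tsum_congr fun s => tsum_congr fun t => ?_
      rw [Measure.map_apply hσσ (measurableSet_singleton _)]
      congr 2
      ext z
      simp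
    rw [← h1]
    refine le_trans (lintegral_mono fun z => ENNReal.rpow_le_rpow ?_ hp0.le)
      (lintegral_add_const_rpow_le (f := fun z : E × E => edist z.1 z.2) (by fun_prop) hp _)
    calc edist (q (σ k z.1)) (q (σ k z.2)) + 2 * ((k : ℝ≥0∞) + 1)⁻¹
        ≤ (edist z.1 z.2 + 2 * ((k : ℝ≥0∞) + 1)⁻¹) + 2 * ((k : ℝ≥0∞) + 1)⁻¹ := by
          gcongr; exact edist_cell_le hq k _ _
      _ = _ := by ring
  have hsum1 (A : Set E) (hA : MeasurableSet A) : ∑' t, γ (A ×ˢ (σ k ⁻¹' {t})) = μ A := by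
    rw [← hγ.1, Measure.map_apply measurable_fst hA, ← measure_iUnion]
    · congr 1; ext z; simp
    · intro i j hij
      exact Set.disjoint_left.2 fun z hz hz' => hij (by
        simp only [Set.mem_prod, Set.mem_preimage, Set.mem_singleton_iff] at hz hz'
        rw [← hz.2, hz'.2])
    · exact fun t => hA.prod (hσ k (measurableSet_singleton t))
  have hsum2 (A : Set E) (hA : MeasurableSet A) : ∑' s, γ ((σ k ⁻¹' {s}) ×ˢ A) = ν A := by
    rw [← hγ.2, Measure.map_apply measurable_snd hA, ← measure_iUnion]
    · congr 1; ext z; simp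
    · intro i j hij
      exact Set.disjoint_left.2 fun z hz hz' => hij (by
        simp only [Set.mem_prod, Set.mem_preimage, Set.mem_singleton_iff] at hz hz'
        rw [← hz.1, hz'.1])
    · exact fun t => (hσ k (measurableSet_singleton t)).prod hA
  obtain ⟨a, N, hr, hcol, hle⟩ := exists_subcoupling_approx
    (γ := fun s t => γ ((σ k ⁻¹' {s}) ×ˢ (σ k ⁻¹' {t}))) (D := cellCost q p k) (φ := φ)
    (tsum_measure_fiber (μ := μ) (hσ k)) (tsum_measure_fiber (μ := ν) (hσ k))
    (fun s => hsum1 _ (hσ k (measurableSet_singleton s)))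
    (fun t => hsum2 _ (hσ k (measurableSet_singleton t)))
    (fun s => ENNReal.mul_ne_top h2 (ENNReal.rpow_ne_top_of_nonneg hp0.le
      (ENNReal.add_ne_top.2 ⟨edist_ne_top _ _, ENNReal.mul_ne_top (by simp) hkt⟩)))
    hD
    (by rw [← lintegral_comp_eq_tsum μ (hσ k) φ]; exact lintegral_fiber_rpow_ne_top hq hp hμ k)
    (by rw [← lintegral_comp_eq_tsum ν (hσ k) φ]; exact lintegral_fiber_rpow_ne_top hq hp hν k)
    (tsub_pos_of_lt hγD).ne'
  exact ⟨k, N, a, hr, hcol, hle.trans (add_tsub_cancel_of_le hγD.le).le⟩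

end Selection

section SelectionKernel

variable {X : Type*} [MeasurableSpace X]

lemma measurable_fillCoupling {u v : X → ℕ → ℝ≥0∞} (hu : ∀ s, Measurable fun x => u x s)
    (hv : ∀ t, Measurable fun x => v x t) (m : ℕ → ℕ → ℝ≥0∞) (s t : ℕ) :
    Measurable fun x => fillCoupling (u x) (v x) m s t := by
  unfold fillCoupling
  exact measurable_const.add ((((hu s).sub measurable_const).mul
    ((hv t).sub measurable_const)).div measurable_const)

variable {E : Type*} [MeasurableSpace E]

lemma measurable_kernel_cellDensity (κ η : Kernel X E) {σ : E → ℕ} (hσ : Measurable σ)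
    (m : ℕ → ℕ → ℝ≥0∞) :
    Measurable fun a : X × (E × E) => cellDensity (κ a.1) (η a.1) σ
      (fillCoupling (fun s => κ a.1 (σ ⁻¹' {s})) (fun t => η a.1 (σ ⁻¹' {t})) m) a.2 := by
  have hu (κ : Kernel X E) (s : ℕ) : Measurable fun x => κ x (σ ⁻¹' {s}) :=
    Kernel.measurable_coe κ (hσ (measurableSet_singleton s))
  have h : Measurable fun a : X × (ℕ × ℕ) =>
      fillCoupling (fun s => κ a.1 (σ ⁻¹' {s})) (fun t => η a.1 (σ ⁻¹' {t})) m a.2.1 a.2.2 /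
        (κ a.1 (σ ⁻¹' {a.2.1}) * η a.1 (σ ⁻¹' {a.2.2})) :=
    measurable_from_prod_countable_left fun i =>
      (measurable_fillCoupling (hu κ) (hu η) m i.1 i.2).div ((hu κ i.1).mul (hu η i.2))
  exact h.comp (measurable_fst.prodMk
    ((hσ.comp (measurable_fst.comp measurable_snd)).prodMk
      (hσ.comp (measurable_snd.comp measurable_snd))))

lemma exists_measurable_selection {good : X → ℕ → Prop} (h : ∀ x, ∃ i, good x i)
    (hm : ∀ i, MeasurableSet {x | good x i}) : ∃ τ : X → ℕ, Measurable τ ∧ ∀ x, good x (τ x) := by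
  classical
  exact ⟨fun x => Nat.find (h x), measurable_find h hm, fun x => Nat.find_spec (h x)⟩

lemma exists_template_enumeration : ∃ (k : ℕ → ℕ) (m : ℕ → ℕ → ℕ → ℝ≥0∞),
    ∀ (k' N : ℕ) (a : ℕ × ℕ →₀ ℕ), ∃ i, k i = k' ∧
      m i = fun s t => (a (s, t) : ℝ≥0∞) / (N + 1) := by
  obtain ⟨e, he⟩ := exists_surjective_nat (ℕ × ℕ × (ℕ × ℕ →₀ ℕ))
  refine ⟨fun i => (e i).1, fun i s t => ((e i).2.2 (s, t) : ℝ≥0∞) / ((e i).2.1 + 1),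
    fun k' N a => ?_⟩
  obtain ⟨i, hi⟩ := he (k', N, a)
  exact ⟨i, by simp [hi], by simp [hi]⟩

/-- The matrix `m` of masses fits below the cell masses of `μ` and `ν`, and filling it up gives
a coupling of cost at most `c`. -/
structure GoodTemplate (μ ν : Measure E) (σ : E → ℕ) (cost : ℕ → ℕ → ℝ≥0∞)
    (m : ℕ → ℕ → ℝ≥0∞) (c : ℝ≥0∞) : Prop where
  left : ∀ s, ∑' t, m s t ≤ μ (σ ⁻¹' {s})
  right : ∀ t, ∑' s, m s t ≤ ν (σ ⁻¹' {t})
  cost_le : ∑' s, ∑' t, cost s t *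
    fillCoupling (fun s => μ (σ ⁻¹' {s})) (fun t => ν (σ ⁻¹' {t})) m s t ≤ c

lemma measurableSet_goodTemplate (κ η : Kernel X E) {σ : E → ℕ} (hσ : Measurable σ)
    (cost m : ℕ → ℕ → ℝ≥0∞) {F : X → ℝ≥0∞} (hF : Measurable F) :
    MeasurableSet {x | GoodTemplate (κ x) (η x) σ cost m (F x)} := by
  have hu (κ : Kernel X E) (s : ℕ) : Measurable fun x => κ x (σ ⁻¹' {s}) :=
    Kernel.measurable_coe κ (hσ (measurableSet_singleton s))
  have h1 : MeasurableSet {x | ∀ s, ∑' t, m s t ≤ κ x (σ ⁻¹' {s})} := by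
    simp only [Set.ofPred_forall]
    exact MeasurableSet.iInter fun s => measurableSet_le measurable_const (hu κ s)
  have h2 : MeasurableSet {x | ∀ t, ∑' s, m s t ≤ η x (σ ⁻¹' {t})} := by
    simp only [Set.ofPred_forall]
    exact MeasurableSet.iInter fun s => measurableSet_le measurable_const (hu η s)
  have h3 : MeasurableSet {x | ∑' s, ∑' t, cost s t *
      fillCoupling (fun s => κ x (σ ⁻¹' {s})) (fun t => η x (σ ⁻¹' {t})) m s t ≤ F x} :=
    measurableSet_le (Measurable.tsum fun s => Measurable.tsum fun t =>
      measurable_const.mul (measurable_fillCoupling (hu κ) (hu η) m s t)) hF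
  convert h1.inter (h2.inter h3) using 1
  ext x
  exact ⟨fun h => ⟨h.1, h.2, h.3⟩, fun h => ⟨h.1, h.2.1, h.2.2⟩⟩

lemma GoodTemplate.isCoupling {μ ν : Measure E} [IsProbabilityMeasure μ] [IsProbabilityMeasure ν]
    {σ : E → ℕ} (hσ : Measurable σ) {cost m : ℕ → ℕ → ℝ≥0∞} {c : ℝ≥0∞}
    (h : GoodTemplate μ ν σ cost m c) :
    IsCoupling ((μ.prod ν).withDensity (cellDensity μ ν σ (fillCoupling
      (fun s => μ (σ ⁻¹' {s})) (fun t => ν (σ ⁻¹' {t})) m))) μ ν :=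
  isCoupling_cellDensity hσ
    (tsum_fillCoupling_right (tsum_measure_fiber hσ) (tsum_measure_fiber hσ) h.left h.right)
    (tsum_fillCoupling_left (tsum_measure_fiber hσ) (tsum_measure_fiber hσ) h.left h.right)

variable [MetricSpace E]

lemma GoodTemplate.lintegral_le {μ ν : Measure E} [IsProbabilityMeasure μ]
    [IsProbabilityMeasure ν] {q : ℕ → E} {σ : ℕ → E → ℕ} (hσ : ∀ k, Measurable (σ k))
    (hq : ∀ k y, edist (q (σ k y)) y ≤ ((k : ℝ≥0∞) + 1)⁻¹) {p : ℝ} (hp : 0 ≤ p) {k : ℕ}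
    {m : ℕ → ℕ → ℝ≥0∞} {c : ℝ≥0∞} (h : GoodTemplate μ ν (σ k) (cellCost q p k) m c) :
    ∫⁻ z, edist z.1 z.2 ^ p ∂((μ.prod ν).withDensity (cellDensity μ ν (σ k) (fillCoupling
      (fun s => μ (σ k ⁻¹' {s})) (fun t => ν (σ k ⁻¹' {t})) m))) ≤ c :=
  (lintegral_mono fun z : E × E => ENNReal.rpow_le_rpow (edist_le_cell hq k z.1 z.2) hp).trans
    ((lintegral_cellDensity_le (hσ k) (cellCost q p k)).trans h.cost_le)

/-- Measurable selection: if for every parameter `x` there is a coupling of `κ x` and `η x` with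
cost less than `F x`, then these couplings can be chosen to depend measurably on `x`. -/
theorem exists_kernel_isCoupling [SecondCountableTopology E] [BorelSpace E]
    (κ η : Kernel X E) [IsMarkovKernel κ] [IsMarkovKernel η] {p : ℝ} (hp : 1 ≤ p) (o : E)
    {F : X → ℝ≥0∞} (hF : Measurable F)
    (h : ∀ x, F x ≠ ∞ → ∫⁻ y, edist y o ^ p ∂(κ x) ≠ ∞ ∧ ∫⁻ y, edist y o ^ p ∂(η x) ≠ ∞ ∧
      ∃ γ, IsCoupling γ (κ x) (η x) ∧ ∫⁻ z, edist z.1 z.2 ^ p ∂γ < F x) :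
    ∃ π : Kernel X (E × E), ∀ x, IsCoupling (π x) (κ x) (η x) ∧
      ∫⁻ z, edist z.1 z.2 ^ p ∂(π x) ≤ F x := by
  have hp0 : 0 ≤ p := by linarith
  have : Nonempty E := ⟨o⟩
  obtain ⟨q, σ, hσ, hq⟩ := exists_quantization (E := E)
  obtain ⟨k, m, hkm⟩ := exists_template_enumeration
  have hgood (x : X) : ∃ i,
      GoodTemplate (κ x) (η x) (σ (k i)) (cellCost q p (k i)) (m i) (F x) := by
    by_cases hx : F x = ∞
    · obtain ⟨i, -, hi⟩ := hkm 0 0 0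
      exact ⟨i, by simp [hi], by simp [hi], by rw [hx]; exact le_top⟩
    · obtain ⟨hκ, hη, γ, hγ, hlt⟩ := h x hx
      obtain ⟨k', N, a, h1, h2, h3⟩ := exists_cell_coupling hσ hq hp hκ hη hγ hlt
      obtain ⟨i, rfl, hi⟩ := hkm k' N a
      exact ⟨i, by rw [hi]; exact h1, by rw [hi]; exact h2, by rw [hi]; exact h3⟩
  obtain ⟨τ, hτ, hτg⟩ := exists_measurable_selection hgood fun i =>
    measurableSet_goodTemplate κ η (hσ (k i)) (cellCost q p (k i)) (m i) hF
  have hG : Measurable fun a : ℕ × (X × (E × E)) =>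
      cellDensity (κ a.2.1) (η a.2.1) (σ (k a.1)) (fillCoupling
        (fun s => κ a.2.1 (σ (k a.1) ⁻¹' {s})) (fun t => η a.2.1 (σ (k a.1) ⁻¹' {t})) (m a.1))
        a.2.2 :=
    measurable_from_prod_countable_right fun i =>
      measurable_kernel_cellDensity κ η (hσ (k i)) (m i)
  have hτ' : Measurable fun a : X × (E × E) => (τ a.1, a) :=
    (hτ.comp measurable_fst).prodMk measurable_id
  let f : X → E × E → ℝ≥0∞ := fun x => cellDensity (κ x) (η x) (σ (k (τ x))) (fillCoupling
    (fun s => κ x (σ (k (τ x)) ⁻¹' {s})) (fun t => η x (σ (k (τ x)) ⁻¹' {t})) (m (τ x)))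
  have hf : Measurable (Function.uncurry f) := hG.comp hτ'
  refine ⟨(κ ×ₖ η).withDensity f, fun x => ?_⟩
  rw [Kernel.withDensity_apply _ hf, Kernel.prod_apply]
  exact ⟨(hτg x).isCoupling (hσ _), (hτg x).lintegral_le hσ hq hp0⟩

end SelectionKernel

section Wasserstein

lemma IsCoupling.swap {E F : Type*} [MeasurableSpace E] [MeasurableSpace F]
    {γ : Measure (E × F)} {μ : Measure E} {ν : Measure F} (h : IsCoupling γ μ ν) :
    IsCoupling (γ.map Prod.swap) ν μ := by
  refine ⟨?_, ?_⟩
  · rw [Measure.map_map measurable_fst measurable_swap]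
    exact h.2
  · rw [Measure.map_map measurable_snd measurable_swap]
    exact h.1

variable {E : Type*} [MeasurableSpace E] [MetricSpace E] {p : ℝ} {μ ν ρ : Measure E}

lemma wassersteinDist_dist_eq (p : ℝ) (μ ν : Measure E) :
    wassersteinDist p dist μ ν = ⨅ (γ : Measure (E × E)) (_ : IsCoupling γ μ ν),
      (∫⁻ z, edist z.1 z.2 ^ p ∂γ) ^ (1 / p) := by
  simp only [wassersteinDist, edist_dist]

lemma exists_isCoupling_lt (hp : 0 < p) {c : ℝ≥0∞} (h : wassersteinDist p dist μ ν ^ p < c) :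
    ∃ γ, IsCoupling γ μ ν ∧ ∫⁻ z, edist z.1 z.2 ^ p ∂γ < c := by
  rw [← ENNReal.lt_rpow_inv_iff hp, wassersteinDist_dist_eq] at h
  simp only [iInf_lt_iff] at h
  obtain ⟨γ, hγ, hlt⟩ := h
  refine ⟨γ, hγ, ?_⟩
  rw [one_div] at hlt
  exact (ENNReal.rpow_lt_rpow_iff (inv_pos.2 hp)).1 hlt

variable [SecondCountableTopology E] [BorelSpace E]

lemma wassersteinDist_comm (μ ν : Measure E) :
    wassersteinDist p dist μ ν = wassersteinDist p dist ν μ := by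
  have key (μ ν : Measure E) : wassersteinDist p dist μ ν ≤ wassersteinDist p dist ν μ := by
    simp only [wassersteinDist_dist_eq]
    refine le_iInf₂ fun γ hγ => (iInf₂_le (γ.map Prod.swap) hγ.swap).trans_eq ?_
    rw [lintegral_map (by fun_prop) measurable_swap]
    simp [edist_comm]
  exact (key μ ν).antisymm (key ν μ)

lemma IsCoupling.lintegral_fst {E F : Type*} [MeasurableSpace E] [MeasurableSpace F]
    {γ : Measure (E × F)} {μ : Measure E} {ν : Measure F} (h : IsCoupling γ μ ν) {f : E → ℝ≥0∞}
    (hf : Measurable f) : ∫⁻ z, f z.1 ∂γ = ∫⁻ x, f x ∂μ := by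
  rw [← h.1, lintegral_map hf measurable_fst]

lemma lintegral_edist_rpow_ne_top_of_isCoupling (hp : 1 ≤ p) {o : E} {γ : Measure (E × E)}
    (hγ : IsCoupling γ μ ν) (hcost : ∫⁻ z, edist z.1 z.2 ^ p ∂γ ≠ ∞)
    (hμ : ∫⁻ y, edist y o ^ p ∂μ ≠ ∞) : ∫⁻ y, edist y o ^ p ∂ν ≠ ∞ := by
  have hm : Measurable fun y : E => edist y o ^ p := by fun_prop
  rw [← hγ.2, lintegral_map hm measurable_snd]
  rw [← hγ.lintegral_fst hm] at hμ
  have h2 : (2 : ℝ≥0∞) ^ (p - 1) ≠ ∞ := ENNReal.rpow_ne_top_of_nonneg (by linarith) (by simp)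
  refine ne_top_of_le_ne_top ?_ (lintegral_mono (g := fun z : E × E =>
    2 ^ (p - 1) * (edist z.1 z.2 ^ p + edist z.1 o ^ p)) fun z => ?_)
  · rw [lintegral_const_mul' _ _ h2, lintegral_add_left (by fun_prop)]
    exact ENNReal.mul_ne_top h2 (ENNReal.add_ne_top.2 ⟨hcost, hμ⟩)
  · refine le_trans (ENNReal.rpow_le_rpow ?_ (by linarith))
      (ENNReal.rpow_add_le_mul_rpow_add_rpow _ _ hp)
    rw [edist_comm z.1 z.2]
    exact edist_triangle _ _ _

lemma compProd_prod_map_fst {X Y Z : Type*} [MeasurableSpace X] [MeasurableSpace Y]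
    [MeasurableSpace Z] (ν : Measure X) [SFinite ν] (k₁ : Kernel X Y) [IsMarkovKernel k₁]
    (k₂ : Kernel X Z) [IsMarkovKernel k₂] :
    (ν ⊗ₘ (k₁ ×ₖ k₂)).map (fun w => (w.1, w.2.1)) = ν ⊗ₘ k₁ := by
  conv_rhs => rw [← Kernel.fst_prod k₁ k₂, Kernel.fst_eq, Measure.compProd_map measurable_fst]
  rfl

lemma compProd_prod_map_snd {X Y Z : Type*} [MeasurableSpace X] [MeasurableSpace Y]
    [MeasurableSpace Z] (ν : Measure X) [SFinite ν] (k₁ : Kernel X Y) [IsMarkovKernel k₁]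
    (k₂ : Kernel X Z) [IsMarkovKernel k₂] :
    (ν ⊗ₘ (k₁ ×ₖ k₂)).map (fun w => (w.1, w.2.2)) = ν ⊗ₘ k₂ := by
  conv_rhs => rw [← Kernel.snd_prod k₁ k₂, Kernel.snd_eq, Measure.compProd_map measurable_snd]
  rfl

lemma exists_gluing [CompleteSpace E] [IsProbabilityMeasure ν] {γ₁ γ₂ : Measure (E × E)}
    (h₁ : IsCoupling γ₁ μ ν) (h₂ : IsCoupling γ₂ ν ρ) :
    ∃ θ : Measure (E × (E × E)), θ.map (fun w => (w.2.1, w.1)) = γ₁ ∧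
      θ.map (fun w => (w.1, w.2.2)) = γ₂ := by
  have : Nonempty E := nonempty_of_isProbabilityMeasure ν
  have := h₁.swap.isProbabilityMeasure
  have := h₂.isProbabilityMeasure
  have e₁ := (γ₁.map Prod.swap).disintegrate (γ₁.map Prod.swap).condKernel
  have e₂ := γ₂.disintegrate γ₂.condKernel
  rw [show (γ₁.map Prod.swap).fst = ν from h₁.swap.1] at e₁
  rw [show γ₂.fst = ν from h₂.1] at e₂
  refine ⟨ν ⊗ₘ ((γ₁.map Prod.swap).condKernel ×ₖ γ₂.condKernel), ?_, ?_⟩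
  · have h := congrArg (Measure.map Prod.swap)
      ((compProd_prod_map_fst ν (γ₁.map Prod.swap).condKernel γ₂.condKernel).trans e₁)
    rw [Measure.map_map measurable_swap (by fun_prop), Measure.map_map measurable_swap
      measurable_swap, Prod.swap_swap_eq, Measure.map_id] at h
    exact h
  · rw [compProd_prod_map_snd, e₂]

lemma wassersteinDist_triangle [CompleteSpace E] (hp : 1 ≤ p) [IsProbabilityMeasure ν] :
    wassersteinDist p dist μ ρ ≤ wassersteinDist p dist μ ν + wassersteinDist p dist ν ρ := by
  simp only [wassersteinDist_dist_eq]
  refine ENNReal.le_iInf₂_add_iInf₂ fun γ₁ h₁ γ₂ h₂ => ?_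
  obtain ⟨θ, hθ₁, hθ₂⟩ := exists_gluing h₁ h₂
  have m1 : Measurable fun w : E × (E × E) => (w.2.1, w.1) := by fun_prop
  have m2 : Measurable fun w : E × (E × E) => (w.1, w.2.2) := by fun_prop
  have m3 : Measurable fun w : E × (E × E) => (w.2.1, w.2.2) := by fun_prop
  have h₃ : IsCoupling (θ.map fun w => (w.2.1, w.2.2)) μ ρ := by
    refine ⟨?_, ?_⟩
    · rw [← h₁.1, ← hθ₁, Measure.map_map measurable_fst m3, Measure.map_map measurable_fst m1]
      rfl
    · rw [← h₂.2, ← hθ₂, Measure.map_map measurable_snd m3, Measure.map_map measurable_snd m2]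
      rfl
  have hd : Measurable fun z : E × E => edist z.1 z.2 ^ p := by fun_prop
  refine (iInf₂_le (f := fun (γ : Measure (E × E)) (_ : IsCoupling γ μ ρ) =>
    (∫⁻ z, edist z.1 z.2 ^ p ∂γ) ^ (1 / p)) _ h₃).trans ?_
  rw [← hθ₁, ← hθ₂, lintegral_map hd m1, lintegral_map hd m2, lintegral_map hd m3]
  refine le_trans (ENNReal.rpow_le_rpow (lintegral_mono fun w : E × (E × E) =>
    ENNReal.rpow_le_rpow (edist_triangle w.2.1 w.1 w.2.2) (by linarith)) (by positivity)) ?_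
  exact ENNReal.lintegral_Lp_add_le (by fun_prop) (by fun_prop) hp

lemma relEntropy_cond_ne_top {X : Type*} [MeasurableSpace X] {μ : Measure X}
    [IsProbabilityMeasure μ] {B : Set X} (hB : MeasurableSet B)
    (h : μ B ≠ 0) : relEntropy μ[|B] μ ≠ ∞ := by
  have := cond_isProbabilityMeasure h
  have hd : μ[|B] = μ.withDensity (B.indicator fun _ => (μ B)⁻¹) := by
    rw [withDensity_indicator hB, withDensity_const, ProbabilityTheory.cond]
  have hac : μ[|B] ≪ μ := hd ▸ withDensity_absolutelyContinuous _ _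
  have hm : Measurable (B.indicator fun _ => (μ B)⁻¹) := measurable_const.indicator hB
  have hr : (μ[|B]).rnDeriv μ =ᵐ[μ[|B]] B.indicator fun _ => (μ B)⁻¹ := by
    refine hac.ae_le ?_
    have := Measure.rnDeriv_withDensity μ hm
    rwa [← hd] at this
  have hint : Integrable (fun x => Real.log (((μ[|B]).rnDeriv μ x).toReal)) μ[|B] := by
    refine (Integrable.of_bound (f := fun x => Real.log ((B.indicator (fun _ => (μ B)⁻¹) x).toReal))
      (Real.measurable_log.comp hm.ennreal_toReal).aestronglyMeasurable
      (|Real.log (μ B)⁻¹.toReal|) (ae_of_all _ fun x => ?_)).congr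
      (hr.mono fun x hx => by simp only [hx])
    by_cases hx : x ∈ B <;> simp [hx]
  rw [relEntropy, if_pos ⟨hac, hint⟩]
  exact ENNReal.ofReal_ne_top

lemma TpIneq.lintegral_edist_rpow_ne_top [IsProbabilityMeasure μ] (hp : 1 ≤ p) {C : ℝ}
    (h : TpIneq p dist C μ) (o : E) : ∫⁻ y, edist y o ^ p ∂μ ≠ ∞ := by
  obtain ⟨N, hN⟩ : ∃ N : ℕ, μ (Metric.ball o N) ≠ 0 := by
    by_contra! hcon
    have := measure_iUnion_null hcon
    rw [Metric.iUnion_ball_nat] at this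
    simp at this
  have := cond_isProbabilityMeasure hN
  have hlt : wassersteinDist p dist μ μ[|Metric.ball o N] ^ p < ∞ := by
    have h1 := ne_top_of_le_ne_top (ENNReal.mul_ne_top ENNReal.ofReal_ne_top
      (relEntropy_cond_ne_top Metric.isOpen_ball.measurableSet hN)) (h μ[|Metric.ball o N] this)
    refine ENNReal.rpow_lt_top_of_nonneg (by linarith) ?_
    simpa using h1
  obtain ⟨γ, hγ, hcost⟩ := exists_isCoupling_lt (by linarith) hlt
  refine lintegral_edist_rpow_ne_top_of_isCoupling hp hγ.swap (μ := μ[|Metric.ball o N]) ?_ ?_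
  · rw [lintegral_map (by fun_prop) measurable_swap]
    simpa [edist_comm] using hcost.ne
  · refine ne_top_of_le_ne_top (b := (N : ℝ≥0∞) ^ p)
      (ENNReal.rpow_ne_top_of_nonneg (by linarith) (by simp)) ?_
    have hae : ∀ᵐ y ∂μ[|Metric.ball o N], edist y o ^ p ≤ (N : ℝ≥0∞) ^ p := by
      filter_upwards [ae_cond_mem Metric.isOpen_ball.measurableSet] with y hy
      refine ENNReal.rpow_le_rpow ?_ (by linarith)
      rw [edist_dist, ← ENNReal.ofReal_natCast]
      exact ENNReal.ofReal_le_ofReal (Metric.mem_ball.1 hy).le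
    exact (lintegral_mono_ae hae).trans (by simp)

end Wasserstein

section Entropy

open InformationTheory

lemma relEntropy_eq_klDiv {X : Type*} [MeasurableSpace X] (ν μ : Measure X)
    [IsProbabilityMeasure ν] [IsProbabilityMeasure μ] : relEntropy ν μ = klDiv ν μ := by
  by_cases h : ν ≪ μ ∧ Integrable (llr ν μ) ν
  · rw [klDiv_of_ac_of_integrable h.1 h.2, relEntropy]
    refine (if_pos h).trans ?_
    simp [llr]
  · rw [klDiv_def, if_neg h, relEntropy]
    exact if_neg h

variable {X Y : Type*} [MeasurableSpace X] [MeasurableSpace Y]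
  [MeasurableSpace.CountableOrCountablyGenerated X Y] (κ η : Kernel X Y)

lemma measurable_ofReal_klFun_rnDeriv :
    Measurable fun w : X × Y => ENNReal.ofReal (klFun (κ.rnDeriv η w.1 w.2).toReal) :=
  (measurable_klFun.comp (κ.measurable_rnDeriv η).ennreal_toReal).ennreal_ofReal

variable [IsMarkovKernel κ] [IsMarkovKernel η]

lemma klDiv_kernel_eq {x : X} (h : κ x ≪ η x) :
    klDiv (κ x) (η x) = ∫⁻ y, ENNReal.ofReal (klFun (κ.rnDeriv η x y).toReal) ∂(η x) := by
  rw [klDiv_eq_lintegral_klFun_of_ac h]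
  refine lintegral_congr_ae ?_
  filter_upwards [κ.rnDeriv_eq_rnDeriv_measure (η := η) (a := x)] with y hy
  rw [hy]

lemma measurable_klDiv_kernel : Measurable fun x => klDiv (κ x) (η x) := by
  classical
  have h : (fun x => klDiv (κ x) (η x)) = fun x => if κ x ≪ η x then
      ∫⁻ y, ENNReal.ofReal (klFun (κ.rnDeriv η x y).toReal) ∂(η x) else ∞ := by
    ext x
    split_ifs with hx
    · exact klDiv_kernel_eq κ η hx
    · exact klDiv_of_not_ac hx
  rw [h]
  exact Measurable.ite (Kernel.measurableSet_absolutelyContinuous κ η)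
    (measurable_ofReal_klFun_rnDeriv κ η).lintegral_kernel_prod_right' measurable_const

lemma lintegral_klDiv_kernel_le (μ : Measure X) [IsProbabilityMeasure μ] :
    ∫⁻ x, klDiv (κ x) (η x) ∂μ ≤ klDiv (μ ⊗ₘ κ) (μ ⊗ₘ η) := by
  by_cases hac : μ ⊗ₘ κ ≪ μ ⊗ₘ η
  swap
  · simp [klDiv_of_not_ac hac]
  have hae := Measure.absolutelyContinuous_compProd_right_iff.1 hac
  have hd : μ ⊗ₘ κ = (μ ⊗ₘ η).withDensity (Function.uncurry (κ.rnDeriv η)) := by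
    refine Eq.trans (Measure.compProd_congr ?_)
      (Measure.compProd_withDensity (κ.measurable_rnDeriv η))
    filter_upwards [hae] with x hx
    exact (Kernel.withDensity_rnDeriv_eq hx).symm
  have hr : (μ ⊗ₘ κ).rnDeriv (μ ⊗ₘ η) =ᵐ[μ ⊗ₘ η] Function.uncurry (κ.rnDeriv η) := by
    rw [hd]
    exact Measure.rnDeriv_withDensity _ (κ.measurable_rnDeriv η)
  rw [klDiv_eq_lintegral_klFun_of_ac hac]
  have h1 : ∫⁻ w, ENNReal.ofReal (klFun ((μ ⊗ₘ κ).rnDeriv (μ ⊗ₘ η) w).toReal) ∂(μ ⊗ₘ η) =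
      ∫⁻ w, ENNReal.ofReal (klFun (κ.rnDeriv η w.1 w.2).toReal) ∂(μ ⊗ₘ η) := by
    refine lintegral_congr_ae ?_
    filter_upwards [hr] with w hw
    rw [hw, Function.uncurry]
  rw [h1, Measure.lintegral_compProd (measurable_ofReal_klFun_rnDeriv κ η)]
  refine lintegral_mono_ae ?_
  filter_upwards [hae] with x hx
  rw [klDiv_kernel_eq κ η hx]

end Entropy

section Inequalities

lemma add_rpow_le_weighted {p r : ℝ} (hp : 1 ≤ p) (hr0 : 0 ≤ r) (hr1 : r < 1) (A B : ℝ≥0∞) :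
    (A + B) ^ p ≤
      ENNReal.ofReal (1 - r) ^ (1 - p) * A ^ p + ENNReal.ofReal r ^ (1 - p) * B ^ p := by
  rcases hr0.eq_or_lt with rfl | hr0
  · rcases eq_or_ne B 0 with rfl | hB
    · simp [ENNReal.zero_rpow_of_pos (by linarith : 0 < p)]
    · rcases hp.eq_or_lt with rfl | hp
      · simp
      · have hB' : B ^ p ≠ 0 := by
          simp [ENNReal.rpow_eq_zero_iff, hB]; intro; linarith
        simp [ENNReal.zero_rpow_of_neg (by linarith : 1 - p < 0), ENNReal.top_mul hB']
  · set u := ENNReal.ofReal (1 - r) with hu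
    set v := ENNReal.ofReal r with hv
    have hu0 : u ≠ 0 := by simp [hu]; linarith
    have hv0 : v ≠ 0 := by simp [hv]; linarith
    have hut : u ≠ ∞ := ENNReal.ofReal_ne_top
    have hvt : v ≠ ∞ := ENNReal.ofReal_ne_top
    have huv : u + v = 1 := by
      rw [hu, hv, ← ENNReal.ofReal_add (by linarith) hr0.le]; simp
    have h := ENNReal.rpow_arith_mean_le_arith_mean2_rpow u v (A / u) (B / v) huv hp
    rw [ENNReal.mul_div_cancel hu0 hut, ENNReal.mul_div_cancel hv0 hvt] at h
    have key {w : ℝ≥0∞} (h0 : w ≠ 0) (ht : w ≠ ∞) (A : ℝ≥0∞) :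
        w * (A / w) ^ p = w ^ (1 - p) * A ^ p := by
      rw [ENNReal.div_rpow_of_nonneg _ _ (by linarith), ENNReal.rpow_sub _ _ h0 ht,
        ENNReal.rpow_one, div_eq_mul_inv, div_eq_mul_inv]
      ring
    rwa [key hu0 hut, key hv0 hvt] at h

lemma lintegral_rpow_le_rpow_lintegral {X : Type*} [MeasurableSpace X] {μ : Measure X}
    [IsProbabilityMeasure μ] {f : X → ℝ≥0∞} (hf : AEMeasurable f μ) {q : ℝ} (hq0 : 0 ≤ q)
    (hq1 : q ≤ 1) : ∫⁻ x, f x ^ q ∂μ ≤ (∫⁻ x, f x ∂μ) ^ q := by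
  have h := ENNReal.lintegral_mul_norm_pow_le hf (aemeasurable_const (b := (1 : ℝ≥0∞)))
    hq0 (sub_nonneg.2 hq1) (by ring)
  simpa using h

lemma sum_rpow_le_card_mul_rpow (n : ℕ) (f : ℕ → ℝ≥0∞) {q : ℝ} (hq0 : 0 ≤ q) (hq1 : q ≤ 1) :
    ∑ i ∈ Finset.range n, f i ^ q ≤ (n : ℝ≥0∞) ^ (1 - q) * (∑ i ∈ Finset.range n, f i) ^ q := by
  have h := ENNReal.lintegral_mul_norm_pow_le (μ := (Measure.count : Measure (Fin n)))
    (f := fun i => f i) (g := fun _ => 1) (measurable_of_finite _).aemeasurable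
    aemeasurable_const hq0 (sub_nonneg.2 hq1) (by ring)
  simpa [lintegral_count, tsum_fintype, Finset.sum_range, mul_comm] using h

end Inequalities

section ChainRule

open InformationTheory

variable {X Y Z W : Type*} [MeasurableSpace X] [MeasurableSpace Y] [MeasurableSpace Z]
  [MeasurableSpace W]

lemma compProd_map_prodMap {π : Measure X} [SFinite π] {s : Kernel X Y} [IsSFiniteKernel s]
    {μ : Measure Z} [SFinite μ] {ρ : Kernel Z W} [IsSFiniteKernel ρ] {f : X → Z} {g : Y → W}
    (hf : Measurable f) (hg : Measurable g) (hπ : π.map f = μ) (hs : ∀ x, (s x).map g = ρ (f x)) :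
    (π ⊗ₘ s).map (Prod.map f g) = μ ⊗ₘ ρ := by
  refine Measure.ext_of_lintegral _ fun φ hφ => ?_
  rw [lintegral_map hφ (hf.prodMap hg), Measure.lintegral_compProd (by fun_prop),
    Measure.lintegral_compProd hφ, ← hπ,
    lintegral_map (hφ.lintegral_kernel_prod_right') hf]
  refine lintegral_congr fun x => ?_
  rw [← hs, lintegral_map (f := fun b => φ (f x, b)) (hφ.comp measurable_prodMk_left) hg]
  rfl

variable {E : Type*} [MeasurableSpace E]

lemma measurable_snoc (n : ℕ) :
    Measurable fun w : (Fin n → E) × E => (Fin.snoc w.1 w.2 : Fin (n + 1) → E) := by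
  refine measurable_pi_iff.2 fun i => ?_
  refine Fin.lastCases ?_ (fun j => ?_) i
  · simpa using measurable_snd
  · simp only [Fin.snoc_castSucc]
    fun_prop

lemma measurable_init_last (n : ℕ) :
    Measurable fun x : Fin (n + 1) → E => ((Fin.init x : Fin n → E), x (Fin.last n)) := by
  refine Measurable.prodMk (measurable_pi_iff.2 fun i => ?_) (measurable_pi_apply _)
  exact measurable_pi_apply _

variable (K : (i : ℕ) → (Fin i → E) → Measure E)

lemma chainMeasure_succ (n : ℕ) (hK : Measurable (K n)) [IsMarkovKernel ⟨K n, hK⟩]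
    [IsProbabilityMeasure (chainMeasure K n)] :
    chainMeasure K (n + 1) =
      (chainMeasure K n ⊗ₘ ⟨K n, hK⟩).map fun w => Fin.snoc w.1 w.2 := by
  have hm : Measurable fun x => (K n x).map (fun y => (Fin.snoc x y : Fin (n + 1) → E)) := by
    have h : (fun x => (K n x).map (fun y => (Fin.snoc x y : Fin (n + 1) → E))) =
        ((Kernel.id ×ₖ ⟨K n, hK⟩).map fun w : (Fin n → E) × E =>
          (Fin.snoc w.1 w.2 : Fin (n + 1) → E)) := by
      ext1 x
      rw [Kernel.map_apply _ (measurable_snoc n), Kernel.prod_apply, Kernel.id_apply,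
        Measure.dirac_prod, Measure.map_map (measurable_snoc n) measurable_prodMk_left]
      rfl
    rw [h]
    exact Kernel.measurable _
  refine Measure.ext_of_lintegral _ fun φ hφ => ?_
  rw [chainMeasure, Measure.lintegral_bind hm.aemeasurable hφ.aemeasurable,
    lintegral_map hφ (measurable_snoc n), Measure.lintegral_compProd
      (f := fun w => φ (Fin.snoc w.1 w.2)) (hφ.comp (measurable_snoc n))]
  refine lintegral_congr fun x => ?_
  exact lintegral_map hφ ((measurable_snoc n).comp measurable_prodMk_left)

lemma isProbabilityMeasure_chainMeasure (hKm : ∀ i, Measurable (K i))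
    (hKp : ∀ i x, IsProbabilityMeasure (K i x)) (n : ℕ) :
    IsProbabilityMeasure (chainMeasure K n) := by
  induction n with
  | zero => exact Measure.dirac.isProbabilityMeasure
  | succ n ih =>
    have : IsMarkovKernel ⟨K n, hKm n⟩ := ⟨hKp n⟩
    rw [chainMeasure_succ K n (hKm n)]
    exact Measure.isProbabilityMeasure_map (measurable_snoc n).aemeasurable

/-- The entropy chain rule along the disintegration of the last coordinate. -/
lemma exists_kernel_chain_rule [StandardBorelSpace E] [Nonempty E] {n : ℕ}
    (P : Measure (Fin n → E)) [IsProbabilityMeasure P] (κ : Kernel (Fin n → E) E)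
    [IsMarkovKernel κ] (Q : Measure (Fin (n + 1) → E)) [IsProbabilityMeasure Q] :
    ∃ (Q' : Measure (Fin n → E)) (ρ : Kernel (Fin n → E) E), IsProbabilityMeasure Q' ∧
      IsMarkovKernel ρ ∧ (Q' ⊗ₘ ρ).map (fun w => (Fin.snoc w.1 w.2 : Fin (n + 1) → E)) = Q ∧
      klDiv Q' P + ∫⁻ x, klDiv (ρ x) (κ x) ∂Q' ≤
        klDiv Q ((P ⊗ₘ κ).map fun w => (Fin.snoc w.1 w.2 : Fin (n + 1) → E)) := by
  have hs := measurable_snoc (E := E) n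
  have hi := measurable_init_last (E := E) n
  set S : Measure ((Fin n → E) × E) := Q.map fun x => (Fin.init x, x (Fin.last n)) with hS
  have : IsProbabilityMeasure S := Measure.isProbabilityMeasure_map hi.aemeasurable
  have hd : S.fst ⊗ₘ S.condKernel = S := S.disintegrate S.condKernel
  refine ⟨S.fst, S.condKernel, inferInstance, inferInstance, ?_, ?_⟩
  · rw [hd, hS, Measure.map_map hs hi]
    convert Measure.map_id
    ext1 x
    exact Fin.snoc_init_self x
  · have hP : ((P ⊗ₘ κ).map fun w => (Fin.snoc w.1 w.2 : Fin (n + 1) → E)).map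
        (fun x => ((Fin.init x : Fin n → E), x (Fin.last n))) = P ⊗ₘ κ := by
      rw [Measure.map_map hi hs]
      convert Measure.map_id
      ext1 w
      simp [Function.comp_apply]
    have : IsProbabilityMeasure ((P ⊗ₘ κ).map fun w => (Fin.snoc w.1 w.2 : Fin (n + 1) → E)) :=
      Measure.isProbabilityMeasure_map hs.aemeasurable
    calc klDiv S.fst P + ∫⁻ x, klDiv (S.condKernel x) (κ x) ∂S.fst
        ≤ klDiv S.fst P + klDiv (S.fst ⊗ₘ S.condKernel) (S.fst ⊗ₘ κ) := by
          gcongr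
          exact lintegral_klDiv_kernel_le _ _ _
      _ = klDiv S (P ⊗ₘ κ) := by rw [← klDiv_compProd_eq_add, hd]
      _ ≤ _ := by
          conv_lhs => rw [← hP, hS]
          exact klDiv_map_le _ _ hi

end ChainRule

section Step

open InformationTheory

variable {E : Type*} [MeasurableSpace E] [MetricSpace E]
  [SecondCountableTopology E] [BorelSpace E] {p C r : ℝ}

lemma TpIneq.wassersteinDist_rpow_le (hp : 0 ≤ p) {μ ρ : Measure E} [IsProbabilityMeasure ρ]
    (h : TpIneq p dist C μ) :
    wassersteinDist p dist ρ μ ^ p ≤ (ENNReal.ofReal (2 * C) * relEntropy ρ μ) ^ (p / 2) := by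
  have h2 := ENNReal.rpow_le_rpow (h ρ inferInstance) (by linarith : 0 ≤ p / 2)
  rwa [wassersteinDist_comm, ← ENNReal.rpow_natCast, ← ENNReal.rpow_mul,
    show ((2 : ℕ) : ℝ) * (p / 2) = p by push_cast; ring] at h2

lemma TpIneq.lintegral_edist_rpow_ne_top_of_relEntropy (hp : 1 ≤ p) {μ ρ : Measure E}
    [IsProbabilityMeasure μ] [IsProbabilityMeasure ρ] (h : TpIneq p dist C μ)
    (hρ : ENNReal.ofReal (2 * C) * relEntropy ρ μ ≠ ∞) (o : E) :
    ∫⁻ y, edist y o ^ p ∂ρ ≠ ∞ := by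
  have hlt : wassersteinDist p dist μ ρ ^ p < ∞ := by
    rw [wassersteinDist_comm]
    exact (h.wassersteinDist_rpow_le (by linarith)).trans_lt
      (ENNReal.rpow_lt_top_of_nonneg (by linarith) hρ)
  obtain ⟨γ, hγ, hcost⟩ := exists_isCoupling_lt (by linarith) hlt
  exact lintegral_edist_rpow_ne_top_of_isCoupling hp hγ hcost.ne
    (h.lintegral_edist_rpow_ne_top hp o)

variable [CompleteSpace E]

lemma wassersteinDist_rpow_le_weighted (hp : 1 ≤ p) (hr0 : 0 ≤ r) (hr1 : r < 1)
    {ρ μ μ' : Measure E} [IsProbabilityMeasure ρ] [IsProbabilityMeasure μ]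
    (h : TpIneq p dist C μ) {b : ℝ≥0∞} (hb : wassersteinDist p dist μ μ' ^ p ≤ b) :
    wassersteinDist p dist ρ μ' ^ p ≤
      ENNReal.ofReal (1 - r) ^ (1 - p) * (ENNReal.ofReal (2 * C) * relEntropy ρ μ) ^ (p / 2) +
        ENNReal.ofReal r ^ (1 - p) * b :=
  calc wassersteinDist p dist ρ μ' ^ p
      ≤ (wassersteinDist p dist ρ μ + wassersteinDist p dist μ μ') ^ p :=
        ENNReal.rpow_le_rpow (wassersteinDist_triangle hp) (by linarith)
    _ ≤ _ := add_rpow_le_weighted hp hr0 hr1 _ _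
    _ ≤ _ := by
        gcongr
        exact h.wassersteinDist_rpow_le (by linarith)

lemma exists_kernel_isCoupling_step {X : Type*} [MeasurableSpace X] (hp : 1 ≤ p) (hr0 : 0 ≤ r)
    (hr1 : r < 1) (ρ μ μ' : Kernel X E) [IsMarkovKernel ρ] [IsMarkovKernel μ] [IsMarkovKernel μ']
    (hμ : ∀ x, TpIneq p dist C (μ x)) (hμ' : ∀ x, TpIneq p dist C (μ' x)) (o : E)
    {b : X → ℝ≥0∞} (hbm : Measurable b) (hb : ∀ x, wassersteinDist p dist (μ x) (μ' x) ^ p ≤ b x)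
    {ε : ℝ≥0∞} (hε : ε ≠ 0) :
    ∃ π : Kernel X (E × E), ∀ x, IsCoupling (π x) (ρ x) (μ' x) ∧
      ∫⁻ z, edist z.1 z.2 ^ p ∂(π x) ≤ ENNReal.ofReal (1 - r) ^ (1 - p) *
        (ENNReal.ofReal (2 * C) * klDiv (ρ x) (μ x)) ^ (p / 2) +
          ENNReal.ofReal r ^ (1 - p) * b x + ε := by
  have : Nonempty E := ⟨o⟩
  refine exists_kernel_isCoupling ρ μ' hp o ?_ fun x hx => ?_
  · exact ((measurable_const.mul (((measurable_klDiv_kernel ρ μ).const_mul _).pow_const _)).add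
      (hbm.const_mul _)).add measurable_const
  · rw [← relEntropy_eq_klDiv] at hx ⊢
    have h1 := (ENNReal.add_ne_top.1 hx).1
    have h2 : ENNReal.ofReal (2 * C) * relEntropy (ρ x) (μ x) ≠ ∞ := by
      intro htop
      refine (ENNReal.add_ne_top.1 h1).1 ?_
      rw [htop, ENNReal.top_rpow_of_pos (by linarith)]
      refine ENNReal.mul_top ?_
      simp [ENNReal.rpow_eq_zero_iff, hr1]
    refine ⟨(hμ x).lintegral_edist_rpow_ne_top_of_relEntropy hp h2 o,
      (hμ' x).lintegral_edist_rpow_ne_top hp o, exists_isCoupling_lt (by linarith) ?_⟩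
    exact (wassersteinDist_rpow_le_weighted hp hr0 hr1 (hμ x) (hb x)).trans_lt
      (ENNReal.lt_add_right h1 hε)

lemma lintegral_stepBound_le {X Y : Type*} [MeasurableSpace X] [MeasurableSpace Y] {n : ℕ}
    (hp0 : 0 ≤ p) (hp2 : p ≤ 2) {π : Measure (X × Y)} {Q : Measure X} {P : Measure Y}
    [IsProbabilityMeasure Q] (hπ : IsCoupling π Q P) {g : X → ℝ≥0∞} (hg : Measurable g)
    (c c₁ c₂ ε : ℝ≥0∞) (s : Fin n → ℝ≥0∞) {f : Fin n → X × Y → ℝ≥0∞} (hf : ∀ k, Measurable (f k))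
    {D : Fin n → ℝ≥0∞} (hD : ∀ k, ∫⁻ z, f k z ∂π ≤ D k) :
    ∫⁻ z, (c₁ * (c * g z.1) ^ (p / 2) + c₂ * ∑ k, s k * f k z + ε) ∂π ≤
      c₁ * (c * ∫⁻ x, g x ∂Q) ^ (p / 2) + c₂ * ∑ k, s k * D k + ε := by
  have : IsProbabilityMeasure π := hπ.isProbabilityMeasure
  have hm : Measurable fun x => (c * g x) ^ (p / 2) := (hg.const_mul c).pow_const _
  have hm1 : Measurable fun z : X × Y => c₁ * (c * g z.1) ^ (p / 2) :=
    (hm.comp measurable_fst).const_mul c₁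
  have hm2 : Measurable fun z => ∑ k, s k * f k z :=
    Finset.measurable_sum _ fun k _ => (hf k).const_mul _
  rw [lintegral_add_right _ measurable_const, lintegral_add_left hm1,
    lintegral_const_mul (f := fun z : X × Y => (c * g z.1) ^ (p / 2)) _ (hm.comp measurable_fst),
    lintegral_const_mul _ hm2, lintegral_finsetSum _ fun k _ => (hf k).const_mul _,
    hπ.lintegral_fst (f := fun x => (c * g x) ^ (p / 2)) hm]
  simp only [lintegral_const, measure_univ, mul_one]
  gcongr with k
  · rw [← lintegral_const_mul _ hg]
    exact lintegral_rpow_le_rpow_lintegral (hg.const_mul c).aemeasurable (by linarith)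
      (by linarith)
  · rw [lintegral_const_mul _ (hf k)]
    exact mul_le_mul_right (hD k) _

end Step

section Induction

open InformationTheory

variable {E : Type*} [MeasurableSpace E] [MetricSpace E] [CompleteSpace E]
  [SecondCountableTopology E] [BorelSpace E] {p C r : ℝ}

/-- A coupling of `Q` with the chain measure, built coordinate by coordinate, together with
recursive bounds `D i` for the transport cost of the `i`-th coordinate in terms of the entropy
`h i` of that coordinate. -/
theorem exists_isCoupling_chainMeasure (hp1 : 1 ≤ p) (hp2 : p ≤ 2) (hr0 : 0 ≤ r) (hr1 : r < 1)
    (K : (i : ℕ) → (Fin i → E) → Measure E)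
    (hKm : ∀ i, Measurable (K i)) (hKp : ∀ i x, IsProbabilityMeasure (K i x))
    (hT : ∀ (i : ℕ) (x : Fin i → E), TpIneq p dist C (K i x))
    (a : ℕ → ℝ) (ha : ∀ j, 0 ≤ a j)
    (hC1 : ∀ (i : ℕ) (x x' : Fin i → E),
      wassersteinDist p dist (K i x) (K i x') ^ p ≤
        ENNReal.ofReal (∑ k : Fin i, a (i - (k : ℕ)) ^ p * dist (x k) (x' k) ^ p))
    {ε : ℝ≥0∞} (hε : ε ≠ 0) (n : ℕ) (Q : Measure (Fin n → E)) [IsProbabilityMeasure Q] :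
    ∃ (h D : ℕ → ℝ≥0∞) (π : Measure ((Fin n → E) × (Fin n → E))),
      IsCoupling π Q (chainMeasure K n) ∧
      ∑ i ∈ Finset.range n, h i ≤ klDiv Q (chainMeasure K n) ∧
      (∀ i : Fin n, ∫⁻ z, edist (z.1 i) (z.2 i) ^ p ∂π ≤ D i) ∧
      ∀ i < n, D i = ENNReal.ofReal (1 - r) ^ (1 - p) * (ENNReal.ofReal (2 * C) * h i) ^ (p / 2) +
        ENNReal.ofReal r ^ (1 - p) *
          ∑ k ∈ Finset.range i, ENNReal.ofReal (a (i - k) ^ p) * D k + ε := by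
  have : Nonempty E := nonempty_of_isProbabilityMeasure (K 0 default)
  obtain ⟨o⟩ := id this
  have hp0 : 0 ≤ p := by linarith
  induction n with
  | zero =>
    have := isProbabilityMeasure_chainMeasure K hKm hKp 0
    exact ⟨0, 0, Q.prod (chainMeasure K 0), ⟨Measure.map_fst_prod.trans (by simp),
      Measure.map_snd_prod.trans (by simp)⟩, by simp, fun i => i.elim0, fun i hi => by omega⟩
  | succ n ih =>
    have hP := isProbabilityMeasure_chainMeasure K hKm hKp n
    have hκ : IsMarkovKernel ⟨K n, hKm n⟩ := ⟨hKp n⟩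
    have hchain := chainMeasure_succ K n (hKm n)
    have hT' : ∀ x, TpIneq p dist C ((⟨K n, hKm n⟩ : Kernel (Fin n → E) E) x) := hT n
    have hC' : ∀ x x' : Fin n → E, wassersteinDist p dist ((⟨K n, hKm n⟩ : Kernel (Fin n → E) E) x)
        ((⟨K n, hKm n⟩ : Kernel (Fin n → E) E) x') ^ p ≤
        ∑ k : Fin n, ENNReal.ofReal (a (n - (k : ℕ)) ^ p) * edist (x k) (x' k) ^ p := by
      refine fun x x' => (hC1 n x x').trans_eq ?_
      rw [ENNReal.ofReal_sum_of_nonneg fun k _ => by have := ha (n - k); positivity]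
      refine Finset.sum_congr rfl fun k _ => ?_
      rw [ENNReal.ofReal_mul (Real.rpow_nonneg (ha _) _), edist_dist,
        ENNReal.ofReal_rpow_of_nonneg dist_nonneg hp0]
    generalize (⟨K n, hKm n⟩ : Kernel (Fin n → E) E) = κ at hκ hchain hT' hC'
    obtain ⟨Q', ρ, hQ', hρ, hQ, hent⟩ := exists_kernel_chain_rule (chainMeasure K n) κ Q
    rw [← hchain] at hent
    obtain ⟨h, D, π, hπ, hh, hD, hDr⟩ := ih Q'
    have : IsProbabilityMeasure π := hπ.isProbabilityMeasure
    have hfm (k : Fin n) : Measurable fun z : (Fin n → E) × (Fin n → E) =>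
        edist (z.1 k) (z.2 k) ^ p := by fun_prop
    obtain ⟨s, hs⟩ := exists_kernel_isCoupling_step hp1 hr0 hr1
      (ρ.comap Prod.fst measurable_fst : Kernel ((Fin n → E) × (Fin n → E)) E)
      (κ.comap Prod.fst measurable_fst) (κ.comap Prod.snd measurable_snd)
      (fun z => hT' z.1) (fun z => hT' z.2) o
      (Finset.measurable_sum Finset.univ fun k _ => (hfm k).const_mul
        (ENNReal.ofReal (a (n - (k : ℕ)) ^ p))) (fun z => by simpa using hC' z.1 z.2) hε
    have : IsMarkovKernel s := ⟨fun z => (hs z).1.isProbabilityMeasure⟩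
    have hsn := measurable_snoc (E := E) n
    have hm : Measurable fun w : ((Fin n → E) × (Fin n → E)) × (E × E) =>
        ((Fin.snoc w.1.1 w.2.1 : Fin (n + 1) → E), (Fin.snoc w.1.2 w.2.2 : Fin (n + 1) → E)) :=
      (hsn.comp (measurable_fst.prodMap measurable_fst)).prodMk
        (hsn.comp (measurable_snd.prodMap measurable_snd))
    set H := ∫⁻ x, klDiv (ρ x) (κ x) ∂Q' with hH
    set d := ENNReal.ofReal (1 - r) ^ (1 - p) * (ENNReal.ofReal (2 * C) * H) ^ (p / 2) +
        ENNReal.ofReal r ^ (1 - p) *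
          ∑ k ∈ Finset.range n, ENNReal.ofReal (a (n - k) ^ p) * D k + ε with hd
    have hlast : ∫⁻ z, ∫⁻ w, edist w.1 w.2 ^ p ∂(s z) ∂π ≤ d := by
      refine (lintegral_mono fun z => (hs z).2).trans ?_
      rw [hd, Finset.sum_range]
      exact lintegral_stepBound_le hp0 hp2 hπ (measurable_klDiv_kernel ρ κ) _ _ _ _ _ hfm hD
    have hu {f : ℕ → ℝ≥0∞} {y : ℝ≥0∞} {i : ℕ} (hi : i < n) : Function.update f n y i = f i :=
      Function.update_of_ne hi.ne _ _
    refine ⟨Function.update h n H, Function.update D n d,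
      (π ⊗ₘ s).map fun w => (Fin.snoc w.1.1 w.2.1, Fin.snoc w.1.2 w.2.2), ⟨?_, ?_⟩, ?_, ?_, ?_⟩
    · rw [← hQ, ← compProd_map_prodMap measurable_fst measurable_fst hπ.1 fun z => (hs z).1.1,
        Measure.map_map measurable_fst hm,
        Measure.map_map hsn (measurable_fst.prodMap measurable_fst)]
      rfl
    · rw [hchain, ← compProd_map_prodMap measurable_snd measurable_snd hπ.2 fun z => (hs z).1.2,
        Measure.map_map measurable_snd hm,
        Measure.map_map hsn (measurable_snd.prodMap measurable_snd)]
      rfl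
    · rw [Finset.sum_range_succ, Function.update_self,
        Finset.sum_congr rfl fun i hi => hu (Finset.mem_range.1 hi)]
      exact (add_le_add_left hh _).trans hent
    · refine Fin.lastCases ?_ fun i => ?_
      · rw [lintegral_map (by fun_prop) hm]
        simp only [Fin.snoc_last, Fin.val_last, Function.update_self]
        rwa [Measure.lintegral_compProd (by fun_prop)]
      · rw [lintegral_map (by fun_prop) hm]
        simp only [Fin.snoc_castSucc, Fin.val_castSucc, hu i.is_lt]
        rw [Measure.lintegral_compProd (by fun_prop)]
        simpa using hD i
    · intro i hi
      have hsum : ∑ k ∈ Finset.range i, ENNReal.ofReal (a (i - k) ^ p) * Function.update D n d k =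
          ∑ k ∈ Finset.range i, ENNReal.ofReal (a (i - k) ^ p) * D k :=
        Finset.sum_congr rfl fun k hk => by rw [hu (by have := Finset.mem_range.1 hk; omega)]
      rw [hsum]
      rcases (Nat.lt_succ_iff.1 hi).lt_or_eq with hi | rfl
      · rw [hu hi, hu hi, hDr i hi]
      · rw [Function.update_self, Function.update_self]

end Induction

section Recursion

/-- A discrete Young-type bound for sequences solving a convolution recursion. -/
lemma one_sub_mul_sum_le_of_recursion {r : ℝ} (hr0 : 0 ≤ r) (hr1 : r ≤ 1) {t D e : ℕ → ℝ≥0∞}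
    (ht : ∑' j, t (j + 1) ≤ ENNReal.ofReal r) {n : ℕ}
    (hD : ∀ i < n, D i = e i + ∑ k ∈ Finset.range i, t (i - k) * D k) :
    ENNReal.ofReal (1 - r) * ∑ i ∈ Finset.range n, D i ≤ ∑ i ∈ Finset.range n, e i := by
  rcases eq_or_ne (∑ i ∈ Finset.range n, e i) ∞ with he | he
  · simp [he]
  have htj (j : ℕ) : t (j + 1) ≠ ∞ :=
    ((ENNReal.le_tsum j).trans ht).trans_lt ENNReal.ofReal_lt_top |>.ne
  have hfin : ∀ i < n, D i ≠ ∞ := by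
    intro i
    induction i using Nat.strong_induction_on with
    | _ i ih =>
      intro hi
      rw [hD i hi]
      refine ENNReal.add_ne_top.2 ⟨ENNReal.sum_ne_top.1 he i (Finset.mem_range.2 hi),
        ENNReal.sum_ne_top.2 fun k hk => ?_⟩
      have hk := Finset.mem_range.1 hk
      refine ENNReal.mul_ne_top ?_ (ih k hk (hk.trans hi))
      rw [show i - k = (i - k - 1) + 1 by omega]
      exact htj _
  set S := ∑ i ∈ Finset.range n, D i with hS
  have hSfin : S ≠ ∞ := ENNReal.sum_ne_top.2 fun i hi => hfin i (Finset.mem_range.1 hi)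
  have hconv : ∑ i ∈ Finset.range n, ∑ k ∈ Finset.range i, t (i - k) * D k ≤
      ENNReal.ofReal r * S := by
    rw [Finset.sum_comm' (t' := Finset.range n) (s' := fun k => Finset.Ico (k + 1) n)
      (by simp only [Finset.mem_range, Finset.mem_Ico]; omega), hS, Finset.mul_sum]
    refine Finset.sum_le_sum fun k _ => ?_
    rw [← Finset.sum_mul, Finset.sum_Ico_eq_sum_range]
    gcongr
    refine le_trans (le_of_eq ?_) ((ENNReal.sum_le_tsum (Finset.range (n - (k + 1)))).trans ht)
    exact Finset.sum_congr rfl fun j _ => by congr 1; omega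
  have hr : ENNReal.ofReal r * S ≠ ∞ := ENNReal.mul_ne_top ENNReal.ofReal_ne_top hSfin
  refine (ENNReal.add_le_add_iff_right hr).1 ?_
  rw [← add_mul, ← ENNReal.ofReal_add (by linarith) hr0, sub_add_cancel, ENNReal.ofReal_one,
    one_mul]
  calc S = ∑ i ∈ Finset.range n, (e i + ∑ k ∈ Finset.range i, t (i - k) * D k) :=
        Finset.sum_congr rfl fun i hi => hD i (Finset.mem_range.1 hi)
    _ ≤ _ := by
        rw [Finset.sum_add_distrib]
        gcongr

lemma ofReal_rpow_mul_tsum_le {p r : ℝ} (hp : 0 < p) {a : ℕ → ℝ} (ha : ∀ j, 0 ≤ a j) (hr0 : 0 ≤ r)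
    (hsum : Summable fun j : ℕ => a (j + 1) ^ p) (hrp : r ^ p = ∑' j : ℕ, a (j + 1) ^ p) :
    ∑' j : ℕ, ENNReal.ofReal r ^ (1 - p) * ENNReal.ofReal (a (j + 1) ^ p) ≤ ENNReal.ofReal r := by
  rw [ENNReal.tsum_mul_left, ← ENNReal.ofReal_tsum_of_nonneg
    (fun j => Real.rpow_nonneg (ha _) _) hsum, ← hrp, ← ENNReal.ofReal_rpow_of_nonneg hr0 hp.le]
  rcases hr0.eq_or_lt with rfl | hr0
  · simp [ENNReal.zero_rpow_of_pos hp]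
  · rw [← ENNReal.rpow_add _ _ (by simpa using hr0) ENNReal.ofReal_ne_top]
    simp

end Recursion

section Cost

variable {E : Type*} [MeasurableSpace E] [MetricSpace E] [SecondCountableTopology E]
  [BorelSpace E] {p : ℝ} {n : ℕ}

lemma wassersteinDist_lp_rpow_le (hp : 0 < p) {Q P : Measure (Fin n → E)}
    {π : Measure ((Fin n → E) × (Fin n → E))} (hπ : IsCoupling π Q P) {D : ℕ → ℝ≥0∞}
    (hD : ∀ i : Fin n, ∫⁻ z, edist (z.1 i) (z.2 i) ^ p ∂π ≤ D i) :
    wassersteinDist p (fun x y : Fin n → E => (∑ i, dist (x i) (y i) ^ p) ^ (1 / p)) Q P ^ p ≤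
      ∑ i ∈ Finset.range n, D i := by
  have hcost (z : (Fin n → E) × (Fin n → E)) :
      ENNReal.ofReal ((∑ i, dist (z.1 i) (z.2 i) ^ p) ^ (1 / p)) ^ p =
        ∑ i, edist (z.1 i) (z.2 i) ^ p := by
    have h0 : 0 ≤ ∑ i, dist (z.1 i) (z.2 i) ^ p := by positivity
    rw [ENNReal.ofReal_rpow_of_nonneg (by positivity) hp.le, ← Real.rpow_mul h0,
      one_div_mul_cancel hp.ne', Real.rpow_one,
      ENNReal.ofReal_sum_of_nonneg fun i _ => by positivity]
    exact Finset.sum_congr rfl fun i _ => by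
      rw [edist_dist, ENNReal.ofReal_rpow_of_nonneg dist_nonneg hp.le]
  rw [← ENNReal.le_rpow_inv_iff hp, ← one_div]
  refine (iInf₂_le π hπ).trans (ENNReal.rpow_le_rpow ?_ (by positivity))
  simp only [hcost]
  rw [lintegral_finsetSum _ fun i _ => by fun_prop, Finset.sum_range]
  exact Finset.sum_le_sum fun i _ => hD i

end Cost

/-- **Theorem 2.5: dependent tensorization of `T_p(C)`, `1 ≤ p ≤ 2`.** -/
theorem dependent_tensorization_Tp
    {E : Type*} [MeasurableSpace E] [MetricSpace E] [CompleteSpace E]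
    [SecondCountableTopology E] [BorelSpace E]
    (p : ℝ) (hp1 : 1 ≤ p) (hp2 : p ≤ 2) (C : ℝ) (hC : 0 < C) (n : ℕ)
    (K : (i : ℕ) → (Fin i → E) → Measure E)
    (hKm : ∀ i, Measurable (K i)) (hKp : ∀ i x, IsProbabilityMeasure (K i x))
    (hT : ∀ (i : ℕ) (x : Fin i → E), TpIneq p dist C (K i x))
    (a : ℕ → ℝ) (ha : ∀ j, 0 ≤ a j)
    (hsum : Summable fun j : ℕ => a (j + 1) ^ p)
    (r : ℝ) (hr0 : 0 ≤ r) (hrp : r ^ p = ∑' j : ℕ, a (j + 1) ^ p) (hr1 : r < 1)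
    (hC1 : ∀ (i : ℕ) (x x' : Fin i → E),
      wassersteinDist p dist (K i x) (K i x') ^ p ≤
        ENNReal.ofReal (∑ k : Fin i, a (i - (k : ℕ)) ^ p * dist (x k) (x' k) ^ p))
    (Q : Measure (Fin n → E)) [IsProbabilityMeasure Q] :
    wassersteinDist p (fun x y : Fin n → E => (∑ i, dist (x i) (y i) ^ p) ^ (1 / p)) Q
        (chainMeasure K n) ≤
      ENNReal.ofReal (1 / (1 - r)) *
        (ENNReal.ofReal (2 * C * (n : ℝ) ^ (2 / p - 1)) *
          relEntropy Q (chainMeasure K n)) ^ (1 / 2 : ℝ) := by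
  have hp0 : 0 < p := by linarith
  set u := ENNReal.ofReal (1 - r) with hu
  have hu0 : u ≠ 0 := by simpa [hu] using hr1
  have hut : u ≠ ∞ := ENNReal.ofReal_ne_top
  set H := relEntropy Q (chainMeasure K n) with hH
  have hP := isProbabilityMeasure_chainMeasure K hKm hKp n
  set M : ℝ≥0∞ := (n : ℝ≥0∞) ^ (1 - p / 2) * (ENNReal.ofReal (2 * C) * H) ^ (p / 2) with hM
  have hup : u⁻¹ ^ p = u⁻¹ * u ^ (1 - p) := by
    rw [ENNReal.rpow_sub _ _ hu0 hut, ENNReal.rpow_one, ENNReal.inv_rpow, ENNReal.div_eq_inv_mul,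
      mul_left_comm, ENNReal.inv_mul_cancel hu0 hut, mul_one]
  have hrhs : (ENNReal.ofReal (1 / (1 - r)) *
      (ENNReal.ofReal (2 * C * (n : ℝ) ^ (2 / p - 1)) * H) ^ (1 / 2 : ℝ)) ^ p =
        u⁻¹ * (u ^ (1 - p) * M) := by
    have hq : 0 ≤ 2 / p - 1 := by rw [sub_nonneg, one_le_div hp0]; exact hp2
    rw [ENNReal.mul_rpow_of_nonneg _ _ hp0.le, ← ENNReal.rpow_mul, one_div,
      ENNReal.ofReal_inv_of_pos (by linarith), ENNReal.ofReal_mul (by positivity),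
      ← ENNReal.ofReal_rpow_of_nonneg (by positivity) hq, ENNReal.ofReal_natCast, mul_right_comm,
      show (1 / 2 : ℝ) * p = p / 2 by ring,
      ENNReal.mul_rpow_of_nonneg _ _ (by positivity), ← ENNReal.rpow_mul,
      show (2 / p - 1) * (p / 2) = 1 - p / 2 by field_simp, ← hu,
      mul_comm (_ ^ (p / 2)), ← hM, hup, mul_assoc]
  rw [← ENNReal.rpow_le_rpow_iff hp0, hrhs, ← ENNReal.div_eq_inv_mul,
    ENNReal.le_div_iff_mul_le (Or.inl hu0) (Or.inl hut), mul_comm]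
  refine ENNReal.le_of_forall_pos_le_add fun δ hδ _ => ?_
  obtain ⟨h, D, π, hπ, hh, hD, hrec⟩ := exists_isCoupling_chainMeasure hp1 hp2 hr0 hr1 K hKm hKp hT
    a ha hC1 (ε := (δ : ℝ≥0∞) / (n + 1)) (by simp [hδ.ne', ENNReal.add_eq_top]) n Q
  rw [← relEntropy_eq_klDiv, ← hH] at hh
  have hS := one_sub_mul_sum_le_of_recursion hr0 hr1.le (n := n) (D := D)
    (ofReal_rpow_mul_tsum_le hp0 ha hr0 hsum hrp)
    (t := fun j => ENNReal.ofReal r ^ (1 - p) * ENNReal.ofReal (a j ^ p))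
    (e := fun i => u ^ (1 - p) * (ENNReal.ofReal (2 * C) * h i) ^ (p / 2) +
      (δ : ℝ≥0∞) / (n + 1)) fun i hi => by
        simp only [mul_assoc, ← Finset.mul_sum]
        rw [hrec i hi, add_right_comm]
  calc u * _ ≤ u * ∑ i ∈ Finset.range n, D i := by
        gcongr
        exact wassersteinDist_lp_rpow_le hp0 hπ hD
    _ ≤ _ := hS
    _ = u ^ (1 - p) * ∑ i ∈ Finset.range n, (ENNReal.ofReal (2 * C) * h i) ^ (p / 2) +
        n * ((δ : ℝ≥0∞) / (n + 1)) := by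
        simp [Finset.sum_add_distrib, Finset.mul_sum]
    _ ≤ u ^ (1 - p) * M + (n + 1) * ((δ : ℝ≥0∞) / (n + 1)) := by
        gcongr
        · refine (sum_rpow_le_card_mul_rpow n _ (by positivity) (by linarith)).trans ?_
          rw [← Finset.mul_sum, hM]
          gcongr
        · exact le_self_add
    _ = u ^ (1 - p) * M + δ := by
        rw [ENNReal.mul_div_cancel (by simp) (by simp [ENNReal.add_eq_top])]

end
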